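/- arXiv:1902.07201 — 2 statements merged into one kernel-verified Lean document; each statement's English description precedes it below -/
import Mathlib

section
/- There exists a function B : ℕ × ℕ → ℕ with the following property: for every n and every ideal I of ℂ[x_0, …, x_n] generated by k homogeneous polynomials of degree at most r, if I is 𝔭-primary (where 𝔭 is the radical of I, a prime ideal), then 𝔭^{B(k, r)} ⊆ I. The bound B(k, r) depends only on k and r, not on n. -/
/-!
Let `𝔭` be the radical of the primary ideal `I`. Over the field of rational functions in a maximal
set of variables that are algebraically independent modulo `𝔭`, the ideal `I` extends to a
zero-dimensional primary ideal, from which it is recovered by contraction. The extension is still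
generated by `k` elements, so its height, the number of remaining variables, is at most `k`.

In dimension zero, `𝔭 ^ N ≤ I` for `N` the dimension of the quotient by `I`, and `N` is the number
of monomials outside the initial ideal. Only finitely many initial ideals arise from `k` polynomials
of degree at most `r` in boundedly many variables over arbitrary fields: all of these systems are
specializations of one universal system over a polynomial ring over `ℤ`, where by Noetherian
induction the initial ideal is constant on the strata of a finite stratification of the spectrum.
-/

open MvPolynomial
open scoped MonomialOrder

universe u v w

section LeadingExponents

variable {σ R : Type*} [CommRing R] (m : MonomialOrder σ)

/-- The exponents of the monomials of the initial ideal of `I` with respect to `m`, when the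
coefficients form a field; in general, all leading exponents of nonzero members of `I`, regardless
of their leading coefficients. -/
def leadingExponents (I : Ideal (MvPolynomial σ R)) : Set (σ →₀ ℕ) :=
  {d | ∃ f ∈ I, f ≠ 0 ∧ m.degree f = d}

theorem degree_leadingCoeff_smul_sub_lt {f g : MvPolynomial σ R} (hfg : m.degree f = m.degree g)
    (h : m.leadingCoeff g • f - m.leadingCoeff f • g ≠ 0) :
    m.degree (m.leadingCoeff g • f - m.leadingCoeff f • g) ≺[m] m.degree f := by
  refine lt_of_le_of_ne (m.degree_sub_le.trans (sup_le m.degree_smul_le ?_)) fun heq ↦ ?_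
  · rw [hfg]; exact m.degree_smul_le
  · refine (m.coeff_degree_ne_zero_iff.mpr h) ?_
    rw [m.toSyn.injective heq, coeff_sub, coeff_smul, coeff_smul, smul_eq_mul, smul_eq_mul,
      MonomialOrder.leadingCoeff, MonomialOrder.leadingCoeff, hfg, mul_comm, sub_self]

theorem exists_smul_mem_of_forall_exists_degree_eq (S : Submonoid R)
    {U E : Submodule R (MvPolynomial σ R)} (hUE : U ≤ E)
    (h : ∀ f ∈ E, f ≠ 0 → ∃ g ∈ U, m.degree g = m.degree f ∧ m.leadingCoeff g ∈ S)
    {f : MvPolynomial σ R} (hf : f ∈ E) : ∃ s ∈ S, s • f ∈ U := by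
  induction hd : m.toSyn (m.degree f) using WellFoundedLT.induction generalizing f with
  | ind _ ih =>
    subst hd
    obtain rfl | hf0 := eq_or_ne f 0
    · exact ⟨1, S.one_mem, by simp⟩
    obtain ⟨g, hgU, hgf, hgS⟩ := h f hf hf0
    let f' := m.leadingCoeff g • f - m.leadingCoeff f • g
    obtain hf' | hf' := eq_or_ne f' 0
    · exact ⟨_, hgS, sub_eq_zero.mp hf' ▸ U.smul_mem _ hgU⟩
    · obtain ⟨s, hs, hsU⟩ := ih _ (degree_leadingCoeff_smul_sub_lt m hgf.symm hf')
        (E.sub_mem (E.smul_mem _ hf) (E.smul_mem _ (hUE hgU))) rfl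
      refine ⟨s * m.leadingCoeff g, S.mul_mem hs hgS, ?_⟩
      have := U.add_mem hsU (U.smul_mem (s * m.leadingCoeff f) hgU)
      rwa [smul_sub, smul_smul, smul_smul, sub_add_cancel] at this

theorem exists_degree_eq_of_mem_span_range {ι : Type*} {h : ι → MvPolynomial σ R}
    (hinj : Function.Injective fun i ↦ m.degree (h i))
    (h0 : ∀ i, m.leadingCoeff (h i) ∈ nonZeroDivisors R)
    {f : MvPolynomial σ R} (hf : f ∈ Submodule.span R (Set.range h)) (hf0 : f ≠ 0) :
    ∃ i, m.degree f = m.degree (h i) := by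
  obtain ⟨c, rfl⟩ := Finsupp.mem_span_range_iff_exists_finsupp.mp hf
  have hc : c.support.Nonempty := Finsupp.support_nonempty_iff.mpr <| by
    rintro rfl; simp at hf0
  obtain ⟨i, hi, hmax⟩ := c.support.exists_max_image (fun i ↦ m.toSyn (m.degree (h i))) hc
  refine ⟨i, m.toSyn.injective (le_antisymm ?_ (m.le_degree ?_))⟩
  · exact m.degree_sum_le.trans (Finset.sup_le fun j hj ↦ m.degree_smul_le.trans (hmax j hj))
  have hlt : ∀ j ∈ c.support, j ≠ i → (c j • h j).coeff (m.degree (h i)) = 0 := fun j hj hji ↦ by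
    rw [coeff_smul, m.coeff_eq_zero_of_lt, smul_zero]
    exact (hmax j hj).lt_of_ne fun heq ↦ hji (hinj (m.toSyn.injective heq))
  rw [mem_support_iff, Finsupp.sum, coeff_sum, Finset.sum_eq_single_of_mem i hi hlt, coeff_smul,
    smul_eq_mul]
  exact fun h ↦ Finsupp.mem_support_iff.mp hi ((h0 i).2 _ h)

theorem degree_map_of_map_leadingCoeff_ne_zero {K : Type*} [CommRing K] (φ : R →+* K)
    {g : MvPolynomial σ R} (hg : φ (m.leadingCoeff g) ≠ 0) :
    m.degree (map φ g) = m.degree g := by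
  refine m.toSyn.injective (le_antisymm (m.degree_le_iff.mpr fun d hd ↦ m.le_degree ?_)
    (m.le_degree ?_))
  · exact support_map_subset φ g hd
  · rwa [mem_support_iff, coeff_map]

theorem isCompl_restrictSupport_compl_leadingExponents {K : Type*} [Field K]
    (I : Ideal (MvPolynomial σ K)) :
    IsCompl (I.restrictScalars K) (restrictSupport K (leadingExponents m I)ᶜ) := by
  constructor
  · rw [Submodule.disjoint_def]
    intro f hfI hf
    by_contra hf0
    exact hf (m.degree_mem_support hf0) ⟨f, hfI, hf0, rfl⟩
  · have hlead : ∀ f ∈ (⊤ : Submodule K (MvPolynomial σ K)), f ≠ 0 →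
        ∃ g ∈ I.restrictScalars K ⊔ restrictSupport K (leadingExponents m I)ᶜ,
          m.degree g = m.degree f ∧ m.leadingCoeff g ∈ nonZeroDivisors K := fun f _ _ ↦ by
      by_cases hfI : m.degree f ∈ leadingExponents m I
      · obtain ⟨g, hgI, hg0, hgf⟩ := hfI
        exact ⟨g, Submodule.mem_sup_left hgI, hgf,
          mem_nonZeroDivisors_of_ne_zero (m.leadingCoeff_ne_zero_iff.mpr hg0)⟩
      · classical
        refine ⟨monomial (m.degree f) 1, Submodule.mem_sup_right ?_, ?_, ?_⟩
        · exact (monomial_mem_restrictSupport K).mpr (.inl hfI)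
        · rw [m.degree_monomial, if_neg one_ne_zero]
        · rw [m.leadingCoeff_monomial]; exact one_mem _
    rw [codisjoint_iff_le_sup]
    intro f hf
    obtain ⟨s, hs, hsf⟩ :=
      exists_smul_mem_of_forall_exists_degree_eq m (nonZeroDivisors K) le_top hlead hf
    rwa [Submodule.smul_mem_iff _ (nonZeroDivisors.ne_zero hs)] at hsf

-- Both sides are `0` when the quotient is infinite-dimensional.
theorem finrank_quotient_eq_ncard_compl_leadingExponents {K : Type*} [Field K]
    (I : Ideal (MvPolynomial σ K)) :
    Module.finrank K (MvPolynomial σ K ⧸ I) = (leadingExponents m I)ᶜ.ncard := by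
  rw [← Nat.card_coe_set_eq,
    ← Module.finrank_eq_nat_card_basis (basisRestrictSupport K (leadingExponents m I)ᶜ)]
  exact (Submodule.quotientEquivOfIsCompl _ _
    (isCompl_restrictSupport_compl_leadingExponents m I)).finrank_eq

theorem exists_finite_forall_leadingExponents_exists_le [Finite σ] (J : Ideal (MvPolynomial σ R)) :
    ∃ B ⊆ leadingExponents m J, B.Finite ∧ ∀ d ∈ leadingExponents m J, ∃ b ∈ B, b ≤ d :=
  ⟨{b | Minimal (· ∈ leadingExponents m J) b}, fun _ hb ↦ hb.prop,
    WellQuasiOrderedLE.finite_of_isAntichain (setOfPred_minimal_antichain _), fun d hd ↦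
    (exists_minimal_le_of_wellFoundedLT (· ∈ leadingExponents m J) d hd).imp fun _ h ↦ h.symm⟩

theorem exists_ne_zero_forall_leadingCoeff_dvd [Finite σ] [IsDomain R]
    (J : Ideal (MvPolynomial σ R)) :
    ∃ a ≠ (0 : R), ∀ d ∈ leadingExponents m J, ∃ g ∈ J, m.degree g = d ∧ m.leadingCoeff g ∣ a := by
  obtain ⟨B, hBJ, hB, hle⟩ := exists_finite_forall_leadingExponents_exists_le m J
  have := hB.fintype
  choose g hgJ hg0 hdeg using fun b : B ↦ hBJ b.2
  refine ⟨∏ b, m.leadingCoeff (g b), Finset.prod_ne_zero_iff.mpr fun b _ ↦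
    m.leadingCoeff_ne_zero_iff.mpr (hg0 b), fun d hd ↦ ?_⟩
  obtain ⟨b, hb, hbd⟩ := hle d hd
  refine ⟨monomial (d - b) 1 * g ⟨b, hb⟩, J.mul_mem_left _ (hgJ _), ?_, ?_⟩
  · classical
    rw [m.degree_mul (by simp) (hg0 _), hdeg, m.degree_monomial, if_neg one_ne_zero,
      tsub_add_cancel_of_le hbd]
  · rw [m.leadingCoeff_mul, m.leadingCoeff_monomial, one_mul]
    exact Finset.dvd_prod_of_mem (fun b ↦ m.leadingCoeff (g b)) (Finset.mem_univ _)

theorem restrictScalars_map_map_eq_span_image {K : Type*} [CommRing K] (φ : R →+* K)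
    (J : Ideal (MvPolynomial σ R)) :
    (J.map (map φ)).restrictScalars K = Submodule.span K (map φ '' (J : Set _)) := by
  have htop : Submodule.span K (Set.range fun d : σ →₀ ℕ ↦ monomial d (1 : K)) = ⊤ := by
    rw [← coe_basisMonomials, Module.Basis.span_eq]
  refine le_antisymm ?_ (Submodule.span_le.mpr fun f hf ↦ Ideal.subset_span hf)
  refine (Submodule.span_smul_of_span_eq_top htop _).ge.trans (Submodule.span_mono ?_)
  rintro _ ⟨_, ⟨d, rfl⟩, _, ⟨f, hf, rfl⟩, rfl⟩
  exact ⟨monomial d 1 * f, J.mul_mem_left _ hf, by simp⟩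

theorem map_mem_span_image {K : Type*} [CommRing K] (φ : R →+* K) {s : Set (MvPolynomial σ R)}
    {f : MvPolynomial σ R} (hf : f ∈ Submodule.span R s) :
    map φ f ∈ Submodule.span K (map φ '' s) := by
  induction hf using Submodule.span_induction with
  | mem f hf => exact Submodule.subset_span ⟨f, hf, rfl⟩
  | zero => simp only [map_zero, zero_mem]
  | add f g _ _ hf hg => simpa only [map_add] using add_mem hf hg
  | smul a f _ hf =>
    rw [smul_eq_C_mul, map_mul, map_C, ← smul_eq_C_mul]
    exact Submodule.smul_mem _ _ hf

theorem leadingExponents_map_eq {K : Type*} [Field K] (φ : R →+* K) (J : Ideal (MvPolynomial σ R))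
    (h : ∀ d ∈ leadingExponents m J, ∃ g ∈ J, m.degree g = d ∧ φ (m.leadingCoeff g) ≠ 0) :
    leadingExponents m (J.map (map φ)) = leadingExponents m J := by
  choose g hgJ hdeg hφ using fun d : leadingExponents m J ↦ h d d.2
  have hdeg_map (d) : m.degree (map φ (g d)) = d :=
    (degree_map_of_map_leadingCoeff_ne_zero m φ (hφ d)).trans (hdeg d)
  have hmap_ne (d) : map φ (g d) ≠ 0 := fun h0 ↦ hφ d <| by
    rw [MonomialOrder.leadingCoeff, ← coeff_map, h0, coeff_zero]
  have hspan : (J.map (map φ)).restrictScalars K ≤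
      Submodule.span K (Set.range fun d ↦ map φ (g d)) := by
    rw [restrictScalars_map_map_eq_span_image, Submodule.span_le]
    rintro _ ⟨f, hf, rfl⟩
    obtain ⟨s, hs, hsf⟩ := exists_smul_mem_of_forall_exists_degree_eq m
      ((nonZeroDivisors K).comap φ) (U := Submodule.span R (Set.range g))
      (E := J.restrictScalars R) (Submodule.span_le.mpr (Set.range_subset_iff.mpr hgJ))
      (fun f hf hf0 ↦ ⟨g ⟨_, f, hf, hf0, rfl⟩, Submodule.subset_span ⟨_, rfl⟩, hdeg _,
        mem_nonZeroDivisors_of_ne_zero (hφ _)⟩) hf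
    have := map_mem_span_image φ hsf
    rwa [smul_eq_C_mul, map_mul, map_C, ← smul_eq_C_mul, ← Set.range_comp,
      Submodule.smul_mem_iff _ (nonZeroDivisors.ne_zero hs)] at this
  ext d
  constructor
  · rintro ⟨f, hf, hf0, rfl⟩
    obtain ⟨d, hd⟩ := exists_degree_eq_of_mem_span_range m
      (fun d d' hd ↦ Subtype.ext (by simpa only [hdeg_map] using hd))
      (fun d ↦ mem_nonZeroDivisors_of_ne_zero (m.leadingCoeff_ne_zero_iff.mpr (hmap_ne d)))
      (hspan hf) hf0
    rw [hd, hdeg_map]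
    exact d.2
  · exact fun hd ↦ ⟨map φ (g ⟨d, hd⟩), Ideal.mem_map_of_mem _ (hgJ _), hmap_ne _, hdeg_map _⟩

theorem exists_ne_zero_forall_leadingExponents_map_eq [Finite σ] [IsDomain R]
    (J : Ideal (MvPolynomial σ R)) :
    ∃ a ≠ (0 : R), ∀ (K : Type w) [Field K] (φ : R →+* K), φ a ≠ 0 →
      leadingExponents m (J.map (map φ)) = leadingExponents m J := by
  obtain ⟨a, ha, hJ⟩ := exists_ne_zero_forall_leadingCoeff_dvd m J
  refine ⟨a, ha, fun K _ φ hφ ↦ leadingExponents_map_eq m φ J fun d hd ↦ ?_⟩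
  obtain ⟨g, hgJ, hgd, hga⟩ := hJ d hd
  exact ⟨g, hgJ, hgd, ne_zero_of_dvd_ne_zero hφ (map_dvd φ hga)⟩

theorem exists_notMem_forall_leadingExponents_map_eq [Finite σ]
    (J : Ideal (MvPolynomial σ R)) (𝔭 : Ideal R) [𝔭.IsPrime] :
    ∃ a ∉ 𝔭, ∀ (K : Type w) [Field K] (φ : R →+* K), 𝔭 ≤ RingHom.ker φ → φ a ≠ 0 →
      leadingExponents m (J.map (map φ)) =
        leadingExponents m (J.map (map (Ideal.Quotient.mk 𝔭))) := by
  obtain ⟨a, ha, hJ⟩ :=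
    exists_ne_zero_forall_leadingExponents_map_eq m (J.map (map (Ideal.Quotient.mk 𝔭)))
  obtain ⟨a, rfl⟩ := Ideal.Quotient.mk_surjective a
  refine ⟨a, fun h ↦ ha (Ideal.Quotient.eq_zero_iff_mem.mpr h), fun K _ φ hφ hφa ↦ ?_⟩
  let ψ : R ⧸ 𝔭 →+* K := Ideal.Quotient.lift 𝔭 φ fun _ h ↦ hφ h
  have hψ : (map ψ).comp (map (Ideal.Quotient.mk 𝔭)) = map (σ := σ) φ := RingHom.ext fun f ↦ by
    rw [RingHom.comp_apply, map_map]; rfl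
  rw [← hJ K ψ hφa, Ideal.map_map, hψ]

theorem exists_finite_forall_leadingExponents_map_mem_of_le_ker [Finite σ] [IsNoetherianRing R]
    (J : Ideal (MvPolynomial σ R)) (𝔞 : Ideal R) :
    ∃ 𝓛 : Set (Set (σ →₀ ℕ)), 𝓛.Finite ∧ ∀ (K : Type w) [Field K] (φ : R →+* K),
      𝔞 ≤ RingHom.ker φ → leadingExponents m (J.map (map φ)) ∈ 𝓛 := by
  induction 𝔞 using WellFoundedGT.induction with
  | ind 𝔞 ih =>
    choose! 𝓛 h𝓛 hmem using ih
    have hgen : ∀ 𝔭 ∈ 𝔞.minimalPrimes, ∃ a ∉ 𝔭, ∀ (K : Type w) [Field K] (φ : R →+* K),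
        𝔭 ≤ RingHom.ker φ → φ a ≠ 0 → leadingExponents m (J.map (map φ)) =
          leadingExponents m (J.map (map (Ideal.Quotient.mk 𝔭))) := fun 𝔭 h𝔭 ↦
      have := h𝔭.1.1
      exists_notMem_forall_leadingExponents_map_eq m J 𝔭
    choose! a ha hL using hgen
    have hlt (𝔭) (h𝔭 : 𝔭 ∈ 𝔞.minimalPrimes) : 𝔞 < 𝔭 ⊔ Ideal.span {a 𝔭} :=
      h𝔭.1.2.trans_lt (left_lt_sup.mpr fun h ↦ ha 𝔭 h𝔭 (h (Ideal.mem_span_singleton_self _)))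
    refine ⟨⋃ 𝔭 ∈ 𝔞.minimalPrimes, insert (leadingExponents m (J.map (map (Ideal.Quotient.mk 𝔭))))
      (𝓛 (𝔭 ⊔ Ideal.span {a 𝔭})), (𝔞.finite_minimalPrimes_of_isNoetherianRing R).biUnion
        fun 𝔭 h𝔭 ↦ (h𝓛 _ (hlt 𝔭 h𝔭)).insert _, fun K _ φ hφ ↦ ?_⟩
    have := RingHom.ker_isPrime φ
    obtain ⟨𝔭, h𝔭, h𝔭φ⟩ := Ideal.exists_minimalPrimes_le hφ
    refine Set.mem_biUnion h𝔭 ?_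
    by_cases hφa : φ (a 𝔭) = 0
    · exact .inr <| hmem _ (hlt 𝔭 h𝔭) K φ <|
        sup_le h𝔭φ ((Ideal.span_singleton_le_iff_mem _).mpr hφa)
    · exact .inl (hL 𝔭 h𝔭 K φ h𝔭φ hφa)

theorem exists_forall_finrank_quotient_map_le [Finite σ] [IsNoetherianRing R]
    (J : Ideal (MvPolynomial σ R)) :
    ∃ D : ℕ, ∀ (K : Type w) [Field K] (φ : R →+* K),
      Module.finrank K (MvPolynomial σ K ⧸ J.map (map φ)) ≤ D := by
  obtain ⟨_, _⟩ := exists_wellFoundedGT σ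
  let m : MonomialOrder σ := .lex
  obtain ⟨𝓛, h𝓛, hmem⟩ :=
    exists_finite_forall_leadingExponents_map_mem_of_le_ker.{w} m J ⊥
  obtain ⟨D, hD⟩ := (h𝓛.image fun L ↦ Lᶜ.ncard).bddAbove
  refine ⟨D, fun K _ φ ↦ ?_⟩
  rw [finrank_quotient_eq_ncard_compl_leadingExponents m]
  exact hD ⟨_, hmem K φ bot_le, rfl⟩

theorem exists_forall_finrank_quotient_span_le {ι σ : Type*} [Finite ι] [Finite σ]
    (T : Finset (σ →₀ ℕ)) :
    ∃ D : ℕ, ∀ (K : Type w) [Field K] (Q : ι → MvPolynomial σ K), (∀ j, (Q j).support ⊆ T) →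
      Module.finrank K (MvPolynomial σ K ⧸ Ideal.span (Set.range Q)) ≤ D := by
  let q (j : ι) : MvPolynomial σ (MvPolynomial (ι × T) ℤ) := ∑ d : T, monomial d (X (j, d))
  obtain ⟨D, hD⟩ := exists_forall_finrank_quotient_map_le.{w} (Ideal.span (Set.range q))
  refine ⟨D, fun K _ Q hQ ↦ ?_⟩
  let φ : MvPolynomial (ι × T) ℤ →+* K := (aeval fun jd : ι × T ↦ (Q jd.1).coeff jd.2).toRingHom
  have hφ (j) : map φ (q j) = Q j := by
    simp only [q, map_sum, map_monomial]
    conv_rhs => rw [(Q j).as_sum, Finset.sum_subset (hQ j) fun d _ hd ↦ by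
      rw [notMem_support_iff.mp hd, monomial_zero], ← Finset.sum_coe_sort]
    simp [φ]
  have := hD K φ
  rwa [Ideal.map_span, ← Set.range_comp, show map φ ∘ q = Q from funext hφ] at this

theorem exists_forall_totalDegree_le_finrank_quotient_span_le (ι σ : Type*) [Finite ι] [Finite σ]
    (r : ℕ) :
    ∃ D : ℕ, ∀ (K : Type w) [Field K] (Q : ι → MvPolynomial σ K), (∀ j, (Q j).totalDegree ≤ r) →
      Module.finrank K (MvPolynomial σ K ⧸ Ideal.span (Set.range Q)) ≤ D := by
  obtain ⟨D, hD⟩ := exists_forall_finrank_quotient_span_le.{w} (ι := ι)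
    (Finsupp.finite_of_degree_le (σ := σ) r).toFinset
  refine ⟨D, fun K _ Q hQ ↦ hD K Q fun j d hd ↦ ?_⟩
  exact (Set.Finite.mem_toFinset _).mpr ((le_totalDegree hd).trans (hQ j))

end LeadingExponents

section Nilpotent

theorem pow_eq_zero_of_pow_succ_eq {M : Type*} [MonoidWithZero M] {x : M} (hx : IsNilpotent x)
    {j : ℕ} (h : x ^ (j + 1) = x ^ j) : x ^ j = 0 := by
  obtain ⟨N, hN⟩ := hx
  have hstable : ∀ i, x ^ (j + i) = x ^ j := fun i ↦ by
    induction i with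
    | zero => rfl
    | succ i ih => rw [← add_assoc, pow_succ, ih, ← pow_succ, h]
  rw [← hstable N, pow_add, hN, mul_zero]

theorem pow_finrank_eq_bot_of_isNilpotent (K : Type*) {S : Type*} [Field K] [CommRing S]
    [Algebra K S] [Module.Finite K S] {I : Ideal S} (hI : IsNilpotent I) :
    I ^ Module.finrank K S = ⊥ := by
  have hchain : ∀ j, I ^ j = ⊥ ∨
      Module.finrank K ((I ^ j).restrictScalars K) + j ≤ Module.finrank K S := fun j ↦ by
    induction j with
    | zero => exact .inr (Submodule.finrank_le _)
    | succ j ih =>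
      refine or_iff_not_imp_left.mpr fun hne ↦ ?_
      have hne' : I ^ j ≠ ⊥ := fun h ↦ hne (le_bot_iff.mp (h ▸ Ideal.pow_le_pow_right j.le_succ))
      have hlt : (I ^ (j + 1)).restrictScalars K < (I ^ j).restrictScalars K :=
        (Ideal.pow_le_pow_right j.le_succ).lt_of_ne fun h ↦ hne'
          (pow_eq_zero_of_pow_succ_eq hI h)
      have := Submodule.finrank_lt_finrank_of_lt hlt
      have := ih.resolve_left hne'
      omega
  refine (hchain _).elim id fun h ↦ ?_
  have hfinrank : Module.finrank K ((I ^ Module.finrank K S).restrictScalars K) = 0 := by omega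
  exact (Submodule.restrictScalars_eq_bot_iff ..).mp (Submodule.finrank_eq_zero.mp hfinrank)

theorem radical_pow_finrank_quotient_le (K : Type*) {S : Type*} [Field K] [CommRing S] [Algebra K S]
    (I : Ideal S) [Module.Finite K (S ⧸ I)] : I.radical ^ Module.finrank K (S ⧸ I) ≤ I := by
  have : IsNoetherianRing (S ⧸ I) := isNoetherian_of_tower K inferInstance
  have hmap : I.radical.map (Ideal.Quotient.mk I) = nilradical (S ⧸ I) := by
    rw [Ideal.map_radical_of_surjective Ideal.Quotient.mk_surjective (Ideal.mk_ker).le,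
      Ideal.map_quotient_self, nilradical, Ideal.zero_eq_bot]
  have hpow := pow_finrank_eq_bot_of_isNilpotent K (IsNoetherianRing.isNilpotent_nilradical (S ⧸ I))
  rwa [← hmap, ← Ideal.map_pow, Ideal.map_eq_bot_iff_le_ker, Ideal.mk_ker] at hpow

end Nilpotent

section Height

theorem height_eq_natCard_of_isMaximal {σ : Type u} [Finite σ] {K : Type v} [Field K]
    (M : Ideal (MvPolynomial σ K)) [hM : M.IsMaximal] : M.height = Nat.card σ := by
  induction σ using Finite.induction_empty_option generalizing hM with
  | @of_equiv α β e ih =>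
    let f := (renameEquiv K e.symm).toRingEquiv
    have : (M.map f).IsMaximal := Ideal.map_isMaximal_of_equiv f
    rw [← f.height_map, ih, Nat.card_congr e]
  | h_empty =>
    let f := isEmptyRingEquiv K PEmpty
    have : (M.map f).IsMaximal := Ideal.map_isMaximal_of_equiv f
    rw [← f.height_map, Ideal.eq_bot_of_prime (M.map f), Ideal.height_bot, Nat.card_of_isEmpty,
      Nat.cast_zero]
  | @h_option α _ ih =>
    let f := (optionEquivLeft K α).toRingEquiv
    have : (M.map f).IsMaximal := Ideal.map_isMaximal_of_equiv f
    have : ((M.map f).under (MvPolynomial α K)).IsMaximal :=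
      Polynomial.isMaximal_comap_C_of_isJacobsonRing _
    have : (M.map f).LiesOver ((M.map f).under (MvPolynomial α K)) := ⟨rfl⟩
    rw [← f.height_map, Polynomial.height_eq_height_add_one ((M.map f).under _), ih,
      Finite.card_option, Nat.cast_add, Nat.cast_one]

theorem natCard_le_of_radical_span_range_isMaximal {ι σ K : Type*} [Finite ι] [Finite σ] [Field K]
    (Q : ι → MvPolynomial σ K) (hQ : (Ideal.span (Set.range Q)).radical.IsMaximal) :
    Nat.card σ ≤ Nat.card ι := by
  have := hQ.isPrime
  have hmin : (Ideal.span (Set.range Q)).radical ∈ (Ideal.span (Set.range Q)).minimalPrimes := by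
    rw [← Ideal.radical_minimalPrimes, Ideal.minimalPrimes_eq_subsingleton_self]
    exact Set.mem_singleton _
  have hheight := Ideal.height_le_card_of_mem_minimalPrimes_span (Set.finite_range Q) hmin
  rw [height_eq_natCard_of_isMaximal, Nat.cast_le] at hheight
  exact hheight.trans (Finite.card_range_le Q)

end Height

section TranscendenceBasis

theorem adjoin_range_mk_X_eq_top {F σ : Type*} [CommRing F] (I : Ideal (MvPolynomial σ F)) :
    Algebra.adjoin F (Set.range fun i ↦ Ideal.Quotient.mkₐ F I (X i)) = ⊤ := by
  rw [← Function.comp_def, Set.range_comp, ← AlgHom.map_adjoin, adjoin_range_X, Algebra.map_top,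
    AlgHom.range_eq_top]
  exact Ideal.Quotient.mkₐ_surjective F I

theorem exists_isTranscendenceBasis_comp_subtypeVal {F A σ : Type*} [CommRing F] [CommRing A]
    [Algebra F A] [FaithfulSMul F A] [IsDomain A] {x : σ → A}
    (hx : Algebra.adjoin F (Set.range x) = ⊤) :
    ∃ s : Set σ, IsTranscendenceBasis F fun i : s ↦ x i := by
  have : Algebra.IsAlgebraic (Algebra.adjoin F (Set.range x)) A :=
    ⟨fun a ↦ isAlgebraic_algebraMap (⟨a, hx ▸ Algebra.mem_top⟩ : Algebra.adjoin F (Set.range x))⟩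
  obtain ⟨t, htx, ht⟩ := exists_isTranscendenceBasis_subset (R := F) (Set.range x)
  have hsurj : Set.SurjOn x Set.univ t := by rwa [Set.SurjOn, Set.image_univ]
  obtain ⟨s, -, hs⟩ := Set.surjOn_iff_exists_bijOn_subset.mp hsurj
  refine ⟨s, (isTranscendenceBasis_image hs.injOn).mpr ?_⟩
  rwa [hs.image_eq]

theorem injective_and_isAlgebraic_of_isTranscendenceBasis {F A σ : Type*} [CommRing F]
    [Nontrivial F] [CommRing A] [Algebra F A] [Algebra (MvPolynomial σ F) A]
    [IsScalarTower F (MvPolynomial σ F) A] {x : σ → A} (hx : IsTranscendenceBasis F x)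
    (h : ∀ i, algebraMap (MvPolynomial σ F) A (X i) = x i) :
    Function.Injective (algebraMap (MvPolynomial σ F) A) ∧
      Algebra.IsAlgebraic (MvPolynomial σ F) A := by
  obtain rfl := funext h
  have haeval : algebraMap (MvPolynomial σ F) A =
      (aeval (R := F) fun i ↦ algebraMap (MvPolynomial σ F) A (X i)).toRingHom :=
    congrArg AlgHom.toRingHom (aeval_unique (IsScalarTower.toAlgHom F (MvPolynomial σ F) A))
  have := hx.isAlgebraic
  refine ⟨?_, Algebra.IsAlgebraic.of_ringHom_of_comp_eq hx.1.aevalEquiv (RingHom.id A)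
      hx.1.aevalEquiv.surjective Function.injective_id ?_⟩
  · rw [haeval]
    exact hx.1
  · exact RingHom.ext fun p ↦ (RingHom.congr_fun haeval p).symm

theorem totalDegree_map_le {R S σ : Type*} [CommSemiring R] [CommSemiring S] (f : R →+* S)
    (p : MvPolynomial σ R) : (map f p).totalDegree ≤ p.totalDegree :=
  Finset.sup_mono (support_map_subset f p)

theorem totalDegree_map_le_of_totalDegree_X_le {F R σ τ : Type*} [CommSemiring F] [CommSemiring R]
    (f : MvPolynomial σ F →+* MvPolynomial τ R) (hC : ∀ a, (f (C a)).totalDegree = 0)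
    (hX : ∀ i, (f (X i)).totalDegree ≤ 1) (p : MvPolynomial σ F) :
    (f p).totalDegree ≤ p.totalDegree := by
  rw [p.as_sum, map_sum, ← p.as_sum]
  refine totalDegree_finsetSum_le fun d hd ↦ ?_
  calc (f (monomial d (p.coeff d))).totalDegree
      ≤ (f (C (p.coeff d))).totalDegree + ∑ i ∈ d.support, (f (X i) ^ d i).totalDegree := by
        rw [monomial_eq, map_mul, Finsupp.prod, map_prod]
        simp_rw [map_pow]
        grw [totalDegree_mul, totalDegree_finsetProd]
    _ ≤ ∑ i ∈ d.support, d i := by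
        rw [hC, zero_add]
        gcongr with i
        grw [totalDegree_pow, hX, mul_one]
    _ ≤ p.totalDegree := le_totalDegree hd

theorem totalDegree_sumAlgEquiv_le {F σ τ : Type*} [CommRing F] (p : MvPolynomial (σ ⊕ τ) F) :
    (sumAlgEquiv F σ τ p).totalDegree ≤ p.totalDegree := by
  cases subsingleton_or_nontrivial F
  · simp [Subsingleton.elim (sumAlgEquiv F σ τ p) 0]
  refine totalDegree_map_le_of_totalDegree_X_le (sumAlgEquiv F σ τ).toAlgHom.toRingHom
    (fun a ↦ ?_) (fun i ↦ ?_) p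
  · simp [sumAlgEquiv_C_inl]
  · cases i <;> simp [sumAlgEquiv_X_inl, sumAlgEquiv_X_inr]

theorem exists_algEquiv_forall_totalDegree_le {σ : Type*} [Finite σ] (F : Type*) [CommRing F]
    (s : Set σ) :
    ∃ (c : ℕ) (e : MvPolynomial σ F ≃ₐ[F] MvPolynomial (Fin c) (MvPolynomial s F)),
      (∀ p, (e p).totalDegree ≤ p.totalDegree) ∧ ∀ i : s, e (X i) = C (X i) := by
  classical
  obtain ⟨c, ⟨φ⟩⟩ := Finite.exists_equiv_fin (sᶜ : Set σ)
  let τ : Fin c ⊕ s ≃ σ :=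
    (φ.symm.sumCongr (Equiv.refl s)).trans ((Equiv.sumComm _ _).trans (Equiv.Set.sumCompl s))
  refine ⟨c, (renameEquiv F τ.symm).trans (sumAlgEquiv F (Fin c) s), fun p ↦ ?_, fun i ↦ ?_⟩
  · rw [AlgEquiv.trans_apply, ← totalDegree_renameEquiv τ.symm p]
    exact totalDegree_sumAlgEquiv_le _
  · have : τ.symm i = Sum.inr i := τ.symm_apply_eq.mpr rfl
    simp [this, sumAlgEquiv_X_inr]

theorem injective_and_isAlgebraic_quotient_map_of_isTranscendenceBasis {F A W ρ : Type*}
    [CommRing F] [Nontrivial F] [CommRing A] [CommRing W] [Algebra F A] [Algebra F W]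
    [Algebra (MvPolynomial ρ F) W] [IsScalarTower F (MvPolynomial ρ F) W] {P : Ideal A} {x : ρ → A}
    (hx : IsTranscendenceBasis F fun i ↦ Ideal.Quotient.mkₐ F P (x i)) (e : A ≃ₐ[F] W)
    (he : ∀ i, e (x i) = algebraMap (MvPolynomial ρ F) W (X i)) :
    Function.Injective (algebraMap (MvPolynomial ρ F) (W ⧸ P.map e)) ∧
      Algebra.IsAlgebraic (MvPolynomial ρ F) (W ⧸ P.map e) :=
  injective_and_isAlgebraic_of_isTranscendenceBasis
    ((Ideal.quotientEquivAlg P (P.map e) e rfl).isTranscendenceBasis hx)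
    fun i ↦ congrArg (Ideal.Quotient.mk (P.map e)) (he i).symm

theorem exists_ringEquiv_injective_and_isAlgebraic_quotient_map {F σ : Type*} [Field F] [Finite σ]
    (P : Ideal (MvPolynomial σ F)) [P.IsPrime] :
    ∃ (c : ℕ) (s : Set σ) (e : MvPolynomial σ F ≃+* MvPolynomial (Fin c) (MvPolynomial s F)),
      (∀ p, (e p).totalDegree ≤ p.totalDegree) ∧
      Function.Injective (algebraMap (MvPolynomial s F) (_ ⧸ P.map e)) ∧
      Algebra.IsAlgebraic (MvPolynomial s F) (_ ⧸ P.map e) := by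
  have : FaithfulSMul F (MvPolynomial σ F ⧸ P) :=
    (faithfulSMul_iff_algebraMap_injective _ _).mpr (algebraMap F (MvPolynomial σ F ⧸ P)).injective
  obtain ⟨s, hs⟩ := exists_isTranscendenceBasis_comp_subtypeVal (adjoin_range_mk_X_eq_top P)
  obtain ⟨c, e, hdeg, he⟩ := exists_algEquiv_forall_totalDegree_le F s
  exact ⟨c, s, e, hdeg, injective_and_isAlgebraic_quotient_map_of_isTranscendenceBasis hs e he⟩

end TranscendenceBasis

section Equiv

variable {A A' : Type*} [CommRing A] [CommRing A'] (e : A ≃+* A')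

theorem map_radical_of_equiv (I : Ideal A) : I.radical.map e = (I.map e).radical := by
  rw [← Ideal.comap_symm e, ← Ideal.comap_symm e, Ideal.comap_radical]

theorem isPrimary_map_of_equiv {I : Ideal A} (hI : I.IsPrimary) : (I.map e).IsPrimary := by
  rw [← Ideal.comap_symm e]
  exact hI.comap (e.symm : A' →+* A)

theorem le_of_map_le_map_of_equiv {I J : Ideal A} (h : I.map e ≤ J.map e) : I ≤ J := by
  rwa [Ideal.map_le_iff_le_comap, Ideal.comap_map_of_bijective e e.bijective] at h

end Equiv

section Localization

variable {A : Type*} [CommRing A]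

theorem radical_pow_le_of_map_of_isPrimary (M : Submonoid A) (W : Type*) [CommRing W] [Algebra A W]
    [IsLocalization M W] {I : Ideal A} (hI : I.IsPrimary) (hdisj : Disjoint (M : Set A) I) {n : ℕ}
    (h : (I.map (algebraMap A W)).radical ^ n ≤ I.map (algebraMap A W)) : I.radical ^ n ≤ I := by
  rw [← IsLocalization.map_radical M, ← Ideal.map_pow, Ideal.map_le_iff_le_comap] at h
  exact h.trans_eq (IsLocalization.under_map_of_isPrimary_disjoint M W hI hdisj)

theorem isAlgebraic_quotient_of_isAlgebraic_quotient_radical {R : Type*} [CommRing R]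
    [NoZeroDivisors R] [Algebra R A] {I : Ideal A} [Algebra.IsAlgebraic R (A ⧸ I.radical)] :
    Algebra.IsAlgebraic R (A ⧸ I) := by
  refine ⟨fun x ↦ ?_⟩
  obtain ⟨a, rfl⟩ := Ideal.Quotient.mk_surjective x
  obtain ⟨p, hp0, hp⟩ := Algebra.IsAlgebraic.isAlgebraic (R := R) (Ideal.Quotient.mkₐ R I.radical a)
  rw [Polynomial.aeval_algHom_apply, Ideal.Quotient.mkₐ_eq_mk, Ideal.Quotient.eq_zero_iff_mem] at hp
  obtain ⟨n, hn⟩ := hp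
  refine ⟨p ^ n, pow_ne_zero n hp0, ?_⟩
  rw [← Ideal.Quotient.mkₐ_eq_mk R, Polynomial.aeval_algHom_apply, Ideal.Quotient.mkₐ_eq_mk,
    Ideal.Quotient.eq_zero_iff_mem, map_pow]
  exact hn

theorem isMaximal_radical_of_finite_quotient (K : Type*) {S : Type*} [Field K] [CommRing S]
    [Algebra K S] (I : Ideal S) [I.radical.IsPrime] [Module.Finite K (S ⧸ I)] :
    I.radical.IsMaximal := by
  have : Module.Finite K (S ⧸ I.radical) :=
    Module.Finite.of_surjective (Ideal.Quotient.factorₐ K I.le_radical).toLinearMap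
      (Ideal.Quotient.factor_surjective I.le_radical)
  have := IsArtinianRing.of_finite K (S ⧸ I.radical)
  exact Ideal.Quotient.maximal_of_isField _ (IsArtinianRing.isField_of_isDomain _)

theorem exists_radical_pow_le_of_finite_quotient :
    ∃ B : ℕ × ℕ → ℕ, ∀ (K : Type u) [Field K] (c k r : ℕ) (Q : Fin k → MvPolynomial (Fin c) K),
      (∀ j, (Q j).totalDegree ≤ r) → (Ideal.span (Set.range Q)).radical.IsPrime →
      Module.Finite K (MvPolynomial (Fin c) K ⧸ Ideal.span (Set.range Q)) →
      (Ideal.span (Set.range Q)).radical ^ B (k, r) ≤ Ideal.span (Set.range Q) := by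
  choose D hD using fun c k r : ℕ ↦
    exists_forall_totalDegree_le_finrank_quotient_span_le.{u} (Fin k) (Fin c) r
  refine ⟨fun kr ↦ (Finset.range (kr.1 + 1)).sup fun c ↦ D c kr.1 kr.2,
    fun K _ c k r Q hQ hprime hfin ↦ ?_⟩
  have hmax := isMaximal_radical_of_finite_quotient K (Ideal.span (Set.range Q))
  have hcard : c ≤ k := by
    have := natCard_le_of_radical_span_range_isMaximal Q hmax
    rwa [Nat.card_fin, Nat.card_fin] at this
  have hle : Module.finrank K (_ ⧸ Ideal.span (Set.range Q)) ≤
      (Finset.range (k + 1)).sup fun c ↦ D c k r :=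
    (hD c k r K Q hQ).trans
      (Finset.le_sup (f := fun c ↦ D c k r) (Finset.mem_range.mpr (Nat.lt_succ_of_le hcard)))
  exact (Ideal.pow_le_pow_right hle).trans (radical_pow_finrank_quotient_le K _)

theorem disjoint_algebraMapSubmonoid_of_injective {R : Type*} [CommRing R] [Nontrivial R]
    [Algebra R A] {P : Ideal A} (hP : Function.Injective (algebraMap R (A ⧸ P))) :
    Disjoint (Algebra.algebraMapSubmonoid A (nonZeroDivisors R) : Set A) P := by
  rw [Set.disjoint_left]
  rintro _ ⟨a, ha, rfl⟩ haP
  refine nonZeroDivisors.ne_zero ha (hP ?_)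
  rw [map_zero]
  exact Ideal.Quotient.eq_zero_iff_mem.mpr haP

theorem isPrime_radical_map_of_isPrimary (M : Submonoid A) (W : Type*) [CommRing W] [Algebra A W]
    [IsLocalization M W] {I : Ideal A} (hI : I.IsPrimary)
    (hdisj : Disjoint (M : Set A) I.radical) : (I.map (algebraMap A W)).radical.IsPrime := by
  rw [← IsLocalization.map_radical M]
  exact IsLocalization.isPrime_of_isPrime_disjoint M W _ (Ideal.isPrime_radical hI) hdisj

theorem finite_quotient_map_map {R K σ : Type*} [Finite σ] [CommRing R] [Field K] [Algebra R K]
    [FaithfulSMul R K] (J : Ideal (MvPolynomial σ R))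
    [Algebra.IsAlgebraic R (MvPolynomial σ R ⧸ J)] :
    Module.Finite K (MvPolynomial σ K ⧸ J.map (map (algebraMap R K))) := by
  let J' := J.map (mapAlgHom (σ := σ) (Algebra.ofId R K))
  let f := Ideal.quotientMapₐ J' (mapAlgHom (Algebra.ofId R K)) Ideal.le_comap_map
  have hX (i : σ) : IsIntegral K (Ideal.Quotient.mkₐ K J' (X i)) := by
    have h : IsAlgebraic R (f (Ideal.Quotient.mk J (X i))) :=
      (Algebra.IsAlgebraic.isAlgebraic _).algHom f
    simpa [f] using (h.extendScalars (FaithfulSMul.algebraMap_injective R K)).isIntegral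
  have htop : integralClosure K (MvPolynomial σ K ⧸ J') = ⊤ := by
    rw [eq_top_iff, ← adjoin_range_mk_X_eq_top, Algebra.adjoin_le_iff]
    rintro _ ⟨i, rfl⟩
    exact hX i
  have : Algebra.IsIntegral K (MvPolynomial σ K ⧸ J') := integralClosure_eq_top_iff.mp htop
  exact Algebra.IsIntegral.finite (R := K) (A := MvPolynomial σ K ⧸ J')

section FractionRing

variable {R K σ : Type*} [CommRing R] [Field K] [Algebra R K] [IsFractionRing R K]
  {I : Ideal (MvPolynomial σ R)}

attribute [local instance] algebraMvPolynomial

theorem isPrime_radical_map_map_of_isPrimary (hI : I.IsPrimary)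
    (hinj : Function.Injective (algebraMap R (MvPolynomial σ R ⧸ I.radical))) :
    (I.map (map (algebraMap R K))).radical.IsPrime :=
  have := (algebraMap R K).domain_nontrivial
  have := isLocalization (σ := σ) (nonZeroDivisors R) K
  isPrime_radical_map_of_isPrimary ((nonZeroDivisors R).map C) _ hI
    (disjoint_algebraMapSubmonoid_of_injective hinj)

theorem radical_pow_le_of_map_map_of_isPrimary (hI : I.IsPrimary)
    (hinj : Function.Injective (algebraMap R (MvPolynomial σ R ⧸ I.radical))) {n : ℕ}
    (h : (I.map (map (algebraMap R K))).radical ^ n ≤ I.map (map (algebraMap R K))) :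
    I.radical ^ n ≤ I :=
  have := (algebraMap R K).domain_nontrivial
  have := isLocalization (σ := σ) (nonZeroDivisors R) K
  have hdisj := disjoint_algebraMapSubmonoid_of_injective hinj
  radical_pow_le_of_map_of_isPrimary ((nonZeroDivisors R).map C) _ hI
    (hdisj.mono_right Ideal.le_radical) h

end FractionRing

theorem exists_radical_pow_le_of_isAlgebraic_quotient_radical :
    ∃ B : ℕ × ℕ → ℕ, ∀ (R : Type u) [CommRing R] [IsDomain R] (c k r : ℕ)
      (Q : Fin k → MvPolynomial (Fin c) R), (∀ j, (Q j).totalDegree ≤ r) →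
      (Ideal.span (Set.range Q)).IsPrimary →
      Function.Injective (algebraMap R (_ ⧸ (Ideal.span (Set.range Q)).radical)) →
      Algebra.IsAlgebraic R (_ ⧸ (Ideal.span (Set.range Q)).radical) →
      (Ideal.span (Set.range Q)).radical ^ B (k, r) ≤ Ideal.span (Set.range Q) := by
  obtain ⟨B, hB⟩ := exists_radical_pow_le_of_finite_quotient.{u}
  refine ⟨B, fun R _ _ c k r Q hQ hI hinj halg ↦ ?_⟩
  have hprime := isPrime_radical_map_map_of_isPrimary (K := FractionRing R) hI hinj
  have : Algebra.IsAlgebraic R (_ ⧸ Ideal.span (Set.range Q)) :=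
    isAlgebraic_quotient_of_isAlgebraic_quotient_radical
  have hfin := finite_quotient_map_map (K := FractionRing R) (Ideal.span (Set.range Q))
  refine radical_pow_le_of_map_map_of_isPrimary (K := FractionRing R) hI hinj ?_
  rw [Ideal.map_span, ← Set.range_comp] at hprime hfin ⊢
  exact hB _ c k r _ (fun j ↦ (totalDegree_map_le _ _).trans (hQ j)) hprime hfin

end Localization

theorem exists_bounded_power_of_radical_le_primary_general :
    ∃ B : ℕ × ℕ → ℕ, ∀ (F : Type u) [Field F] (σ : Type v) [Finite σ] (k r : ℕ)
      (Q : Fin k → MvPolynomial σ F), (∀ j, (Q j).totalDegree ≤ r) →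
      (Ideal.span (Set.range Q)).IsPrimary →
      (Ideal.span (Set.range Q)).radical ^ B (k, r) ≤ Ideal.span (Set.range Q) := by
  obtain ⟨B, hB⟩ := exists_radical_pow_le_of_isAlgebraic_quotient_radical.{max u v}
  refine ⟨B, fun F _ σ _ k r Q hQ hprimary ↦ ?_⟩
  have := Ideal.isPrime_radical hprimary
  obtain ⟨c, s, e, hdeg, hinj, halg⟩ :=
    exists_ringEquiv_injective_and_isAlgebraic_quotient_map (Ideal.span (Set.range Q)).radical
  have hmap : (Ideal.span (Set.range Q)).map e = Ideal.span (Set.range (e ∘ Q)) := by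
    rw [Ideal.map_span, ← Set.range_comp]
  have hrad : (Ideal.span (Set.range Q)).radical.map e =
      (Ideal.span (Set.range (e ∘ Q))).radical := by
    rw [← hmap, map_radical_of_equiv]
  rw [hrad] at hinj halg
  have hprimary' : (Ideal.span (Set.range (e ∘ Q))).IsPrimary :=
    hmap ▸ isPrimary_map_of_equiv e hprimary
  have hpow := hB _ c k r (e ∘ Q) (fun j ↦ (hdeg _).trans (hQ j)) hprimary' hinj halg
  rw [← hrad, ← hmap, ← Ideal.map_pow] at hpow
  exact le_of_map_le_map_of_equiv e hpow

/-- There is a function `B : ℕ × ℕ → ℕ` such that for every ideal `I` of `ℂ[x₀, …, xₙ]`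
generated by `k` homogeneous polynomials of degree at most `r`, if `I` is primary (with
radical the prime `𝔭`), then `𝔭^{B(k,r)} ⊆ I`. -/
theorem exists_bounded_power_of_radical_le_primary :
    ∃ B : ℕ × ℕ → ℕ, ∀ (n k r : ℕ)
      (Q : Fin k → MvPolynomial (Fin (n + 1)) ℂ),
      (∀ j, ∃ e ≤ r, (Q j).IsHomogeneous e) →
      (Ideal.span (Set.range Q)).IsPrimary →
      (Ideal.span (Set.range Q)).radical ^ B (k, r) ≤ Ideal.span (Set.range Q) := by
  obtain ⟨B, hB⟩ := exists_bounded_power_of_radical_le_primary_general.{0, 0}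
  exact ⟨B, fun n k r Q hQ ↦ hB ℂ (Fin (n + 1)) k r Q fun j ↦
    have ⟨_, he, hhom⟩ := hQ j
    hhom.totalDegree_le.trans he⟩
end

section
/- Let C = F_1 + F_2 + F_3 be a simple homogeneous ΣΠΣΠ(3,2) circuit over ℂ: each F_i = l_{i1} ⋯ l_{i d_i} is a product of irreducible homogeneous polynomials l_{ij} ∈ ℂ[x_0, …, x_n] of degree 1 or 2, the F_i are homogeneous of the same degree, and gcd(F_1, F_2, F_3) = 1. Assume: (a) C is SG, i.e., for every i ∈ {1,2,3} and every choice of one factor l_{j, s_j} from each of the two branches j ≠ i, the polynomial F_i lies in the ideal generated by those two chosen factors; (b) for all i ≠ j and all degree-2 factors l_{ik} of F_i and l_{jt} of F_j, the ideal ⟨l_{ik}, l_{jt}⟩ is prime; (c) not all degree-2 factors among the l_{ij} belong to the same branch (there exist degree-2 factors in at least two different branches). Then the transcendence degree over ℂ of the set of all factors {l_{ij}} is less than 12; in particular, any algebraically independent (over ℂ) subset of {l_{ij}} has fewer than 12 elements. -/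
/-!
If some factor is linear, the quadrics are expressed through few linear forms. Modulo a linear
factor `a` of one branch, a quadric `q` of a second branch becomes a product, so `q = a m + γ s t`
with linear factors `s`, `t` of the third branch. A linear form outside the span of `a`, `m`, `s`,
`t` could be eliminated without changing `q`, which would make `q` reducible; hence the linear
factors of any two branches span at most `4` dimensions, all linear factors at most `8`, and
comparing two expressions of `q` shows that `m` is in their span as well.

If all factors are quadrics, the primality hypothesis turns the Sylvester–Gallai condition into the
Edelstein–Kelly configuration: the line through points of two branches meets the third. Its rank
`r` is bounded as follows. Move the points `v i` by a linear map maximising the determinant under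
`∑ ‖v i‖ ^ p = 1`; optimality yields a weighted isotropy identity, so that
`∑ ‖v i‖ ^ (p - 2) ‖v j‖ ^ (p - 2) |⟪v i, v j⟫| ^ 2 = 1 / r`. A dependent triple cannot be nearly
orthogonal, so it contributes a sixth of its squared mass as `p → 0`, and by averaging so does
every line; summed over the lines this is at least `1 / 12`, since the squared masses of the lines
add up to at least half of the total. The diagonal makes the inequality `1 / r > 1 / 12` strict.
-/

section

open Module Finset
open scoped InnerProductSpace

theorem apply_ne_zero_of_det_ne_zero {K V : Type*} [Field K] [AddCommGroup V] [Module K V]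
    [FiniteDimensional K V] {f : V →ₗ[K] V} (hf : f.det ≠ 0) {x : V} (hx : x ≠ 0) : f x ≠ 0 :=
  have hker : LinearMap.ker f = ⊥ := not_not.mp (mt LinearMap.det_eq_zero_iff_ker_ne_bot.mpr hf)
  (map_ne_zero_iff f (LinearMap.ker_eq_bot.mp hker)).mpr hx

theorem rpow_sub_two_mul_sq {a : ℝ} (ha : a ≠ 0) (p : ℝ) : a ^ (p - 2) * a ^ 2 = a ^ p := by
  rw [← Nat.cast_ofNat (R := ℝ), Real.rpow_sub_natCast ha, div_mul_cancel₀ _ (pow_ne_zero 2 ha)]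

section LewisPosition

variable {𝕜 E ι : Type*} [RCLike 𝕜] [NormedAddCommGroup E] [InnerProductSpace 𝕜 E]
  [Fintype ι]

theorem sum_norm_rpow_smul (c : 𝕜) (z : ι → E) (p : ℝ) :
    ∑ i, ‖c • z i‖ ^ p = ‖c‖ ^ p * ∑ i, ‖z i‖ ^ p := by
  simp only [norm_smul, mul_sum, Real.mul_rpow (norm_nonneg _) (norm_nonneg _)]

theorem sum_norm_rpow_pos [Nonempty ι] {z : ι → E} (hz : ∀ i, z i ≠ 0) (p : ℝ) :
    0 < ∑ i, ‖z i‖ ^ p :=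
  sum_pos (fun i _ => Real.rpow_pos_of_pos (norm_pos_iff.mpr (hz i)) p) univ_nonempty

theorem norm_transvection_sq (s : ℝ) (x y : E) :
    ‖LinearMap.transvection ((s : 𝕜) • innerₛₗ 𝕜 x) x y‖ ^ 2
      = ‖y‖ ^ 2 + (2 * s + s ^ 2 * ‖x‖ ^ 2) * ‖⟪x, y⟫_𝕜‖ ^ 2 := by
  have hre : RCLike.re ⟪y, (s * ⟪x, y⟫_𝕜 : 𝕜) • x⟫_𝕜 = s * ‖⟪x, y⟫_𝕜‖ ^ 2 := by
    rw [inner_smul_right, mul_assoc, RCLike.re_ofReal_mul, inner_mul_symm_re_eq_norm,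
      norm_mul, norm_inner_symm y x, sq]
  rw [LinearMap.transvection.apply, LinearMap.smul_apply, innerₛₗ_apply_apply, smul_eq_mul,
    norm_add_sq (𝕜 := 𝕜), hre, norm_smul, norm_mul, RCLike.norm_ofReal, mul_pow, mul_pow, sq_abs]
  ring

theorem hasDerivAt_sum_norm_transvection_rpow {z : ι → E} (hz : ∀ i, z i ≠ 0) (p : ℝ) (x : E) :
    HasDerivAt
      (fun s : ℝ => ∑ i, ‖LinearMap.transvection ((s : 𝕜) • innerₛₗ 𝕜 x) x (z i)‖ ^ p)
      (p * ∑ i, ‖z i‖ ^ (p - 2) * ‖⟪x, z i⟫_𝕜‖ ^ 2) 0 := by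
  have hpow : ∀ (a q : ℝ), 0 ≤ a → (a ^ 2) ^ (q / 2) = a ^ q := fun a q ha => by
    rw [← Real.rpow_natCast, ← Real.rpow_mul ha]; congr 1; push_cast; ring
  rw [mul_sum]
  refine HasDerivAt.fun_sum fun i _ => ?_
  have hsq : HasDerivAt (fun s : ℝ => ‖LinearMap.transvection ((s : 𝕜) • innerₛₗ 𝕜 x) x (z i)‖ ^ 2)
      (2 * ‖⟪x, z i⟫_𝕜‖ ^ 2) 0 := by
    simp only [norm_transvection_sq]
    have hlin := (hasDerivAt_id (0 : ℝ)).const_mul 2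
    have hquad := ((hasDerivAt_id (0 : ℝ)).pow 2).mul_const (‖x‖ ^ 2)
    exact (((hlin.add hquad).mul_const _).const_add _).congr_deriv (by simp)
  have hrpow := hsq.rpow_const (p := p / 2) (Or.inl (by simpa using hz i))
  simp only [hpow _ _ (norm_nonneg _)] at hrpow
  refine hrpow.congr_deriv ?_
  rw [show p / 2 - 1 = (p - 2) / 2 by ring, hpow _ _ (norm_nonneg _)]
  simp
  ring

variable [FiniteDimensional 𝕜 E]

theorem isCompact_setOf_sum_norm_rpow_le_one {v : ι → E}
    (hspan : Submodule.span 𝕜 (Set.range v) = ⊤) {p : ℝ} (hp : 0 < p) :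
    IsCompact {T : E →L[𝕜] E | ∑ i, ‖T (v i)‖ ^ p ≤ 1} := by
  let evalAt : (E →L[𝕜] E) →ₗ[𝕜] ι → E :=
    LinearMap.pi fun i => (ContinuousLinearMap.apply 𝕜 E (v i)).toLinearMap
  have hinj : Function.Injective evalAt := fun S T h =>
    ContinuousLinearMap.coe_injective <| LinearMap.ext_on_range hspan fun i => congrFun h i
  have : ProperSpace (ι → E) := FiniteDimensional.proper_rclike 𝕜 (ι → E)
  have hcont : Continuous fun y : ι → E => ∑ i, ‖y i‖ ^ p :=
    continuous_finsetSum _ fun i _ =>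
      (continuous_apply i).norm.rpow_const fun _ => Or.inr hp.le
  have hball : {y : ι → E | ∑ i, ‖y i‖ ^ p ≤ 1} ⊆ Metric.closedBall 0 1 := by
    intro y hy
    refine mem_closedBall_zero_iff.mpr ((pi_norm_le_iff_of_nonneg zero_le_one).mpr fun i => ?_)
    have hi : ‖y i‖ ^ p ≤ 1 := (single_le_sum (f := fun i => ‖y i‖ ^ p)
      (fun _ _ => Real.rpow_nonneg (norm_nonneg _) _) (mem_univ i)).trans hy
    exact le_of_not_gt fun hlt => hi.not_gt (Real.one_lt_rpow hlt hp)
  have hcompact : IsCompact {y : ι → E | ∑ i, ‖y i‖ ^ p ≤ 1} :=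
    (isCompact_closedBall 0 1).of_isClosed_subset (isClosed_le hcont continuous_const) hball
  exact (LinearMap.isClosedEmbedding_of_injective
    (LinearMap.ker_eq_bot.mpr hinj)).isCompact_preimage hcompact

theorem norm_det_le_mul_rpow_of_isMaxOn [Nonempty ι] {v : ι → E} {p : ℝ} (hp : 0 < p)
    {T S : E →L[𝕜] E}
    (hT : IsMaxOn (fun T : E →L[𝕜] E => ‖T.det‖) {T | ∑ i, ‖T (v i)‖ ^ p ≤ 1} T)
    (hS : 0 < ∑ i, ‖S (v i)‖ ^ p) :
    ‖S.det‖ ≤ ‖T.det‖ * (∑ i, ‖S (v i)‖ ^ p) ^ (finrank 𝕜 E / p) := by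
  set G := ∑ i, ‖S (v i)‖ ^ p
  set t : ℝ := G ^ (-p⁻¹)
  have ht : 0 < t := Real.rpow_pos_of_pos hS _
  have htp : t ^ p = G⁻¹ := by
    rw [← Real.rpow_mul hS.le, neg_mul, inv_mul_cancel₀ hp.ne', Real.rpow_neg_one]
  have htr : t ^ finrank 𝕜 E * G ^ (finrank 𝕜 E / p) = 1 := by
    rw [← Real.rpow_natCast, ← Real.rpow_mul hS.le, ← Real.rpow_add hS,
      show -p⁻¹ * finrank 𝕜 E + finrank 𝕜 E / p = (0 : ℝ) by ring, Real.rpow_zero]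
  have hmem : ∑ i, ‖((t : 𝕜) • S) (v i)‖ ^ p ≤ 1 := by
    simp only [smul_apply]
    rw [sum_norm_rpow_smul, RCLike.norm_of_nonneg ht.le, htp, inv_mul_cancel₀ hS.ne']
  have hdet : ‖((t : 𝕜) • S).det‖ = t ^ finrank 𝕜 E * ‖S.det‖ := by
    rw [ContinuousLinearMap.det, ContinuousLinearMap.toLinearMap_smul, LinearMap.det_smul, norm_mul,
      norm_pow, RCLike.norm_of_nonneg ht.le]
  calc ‖S.det‖ = t ^ finrank 𝕜 E * ‖S.det‖ * G ^ (finrank 𝕜 E / p) := by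
        rw [mul_right_comm, htr, one_mul]
    _ ≤ ‖T.det‖ * G ^ (finrank 𝕜 E / p) := by
        rw [← hdet]
        gcongr
        exact hT hmem

theorem exists_forall_norm_det_le_rpow [Nonempty ι] {v : ι → E} (hv : ∀ i, v i ≠ 0)
    (hspan : Submodule.span 𝕜 (Set.range v) = ⊤) {p : ℝ} (hp : 0 < p) :
    ∃ T : E →ₗ[𝕜] E, (∀ i, T (v i) ≠ 0) ∧ ∑ i, ‖T (v i)‖ ^ p = 1 ∧
      ∀ A : E →ₗ[𝕜] E, ‖A.det‖ ≤ (∑ i, ‖A (T (v i))‖ ^ p) ^ (finrank 𝕜 E / p) := by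
  have hzero : (0 : E →L[𝕜] E) ∈ {T : E →L[𝕜] E | ∑ i, ‖T (v i)‖ ^ p ≤ 1} := by
    simp [Real.zero_rpow hp.ne']
  obtain ⟨T, hTmem, hTmax⟩ := (isCompact_setOf_sum_norm_rpow_le_one hspan hp).exists_isMaxOn
    ⟨0, hzero⟩ ContinuousLinearMap.continuous_det.norm.continuousOn
  have hdet : 0 < ‖T.det‖ := by
    have hid := norm_det_le_mul_rpow_of_isMaxOn (S := ContinuousLinearMap.id 𝕜 E) hp hTmax
      (sum_norm_rpow_pos hv p)
    refine (norm_nonneg _).lt_of_ne fun h0 => ?_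
    rw [← h0, zero_mul, ContinuousLinearMap.det, ContinuousLinearMap.coe_id, LinearMap.det_id,
      norm_one] at hid
    exact hid.not_gt one_pos
  have hT : ∀ i, T (v i) ≠ 0 := fun i =>
    apply_ne_zero_of_det_ne_zero (f := T.toLinearMap) (norm_pos_iff.mp hdet) (hv i)
  have hle : ∀ A : E →ₗ[𝕜] E, ‖A.det‖ ≤ (∑ i, ‖A (T (v i))‖ ^ p) ^ (finrank 𝕜 E / p) := by
    intro A
    by_cases hA : A.det = 0
    · rw [hA, norm_zero]
      positivity
    have hAT : ∀ i, A (T (v i)) ≠ 0 := fun i => apply_ne_zero_of_det_ne_zero hA (hT i)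
    have hmax := norm_det_le_mul_rpow_of_isMaxOn (S := A.toContinuousLinearMap ∘L T) hp hTmax
      (sum_norm_rpow_pos hAT p)
    have hmul : (A.toContinuousLinearMap ∘L T).det = A.det * T.det := LinearMap.det_comp A T
    rw [hmul, norm_mul, mul_comm] at hmax
    exact le_of_mul_le_mul_left hmax hdet
  refine ⟨T, hT, le_antisymm hTmem (le_of_not_gt fun hlt => ?_), hle⟩
  have hid := hle LinearMap.id
  rw [LinearMap.det_id, norm_one] at hid
  have : Nontrivial E := ⟨⟨v (Classical.arbitrary ι), 0, hv _⟩⟩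
  have hrank : (0 : ℝ) < finrank 𝕜 E := Nat.cast_pos.mpr finrank_pos
  exact hid.not_gt (Real.rpow_lt_one (sum_norm_rpow_pos hT p).le hlt (div_pos hrank hp))

/-- A finite family of vectors is in Lewis position for the exponent `p` if, weighted by the
density `‖z i‖ ^ (p - 2)`, it is isotropic, with the normalisation that the `p`-th powers of the
norms add up to `1`. -/
structure IsLewisPosition (𝕜 : Type*) {E ι : Type*} [RCLike 𝕜] [NormedAddCommGroup E]
    [InnerProductSpace 𝕜 E] [Fintype ι] (p : ℝ) (z : ι → E) : Prop where
  sum_norm_rpow : ∑ i, ‖z i‖ ^ p = 1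
  isotropic : ∀ x, ∑ i, ‖z i‖ ^ (p - 2) * ‖⟪x, z i⟫_𝕜‖ ^ 2 = ‖x‖ ^ 2 / finrank 𝕜 E

theorem isLewisPosition_of_norm_det_le_rpow {z : ι → E} (hz : ∀ i, z i ≠ 0) {p : ℝ} (hp : p ≠ 0)
    (hsum : ∑ i, ‖z i‖ ^ p = 1)
    (hdet : ∀ A : E →ₗ[𝕜] E, ‖A.det‖ ≤ (∑ i, ‖A (z i)‖ ^ p) ^ (finrank 𝕜 E / p)) :
    IsLewisPosition 𝕜 p z := by
  refine ⟨hsum, fun x => ?_⟩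
  set A : ℝ → E →ₗ[𝕜] E := fun s => LinearMap.transvection ((s : 𝕜) • innerₛₗ 𝕜 x) x
  have hdetA : ∀ s : ℝ, 1 + s * ‖x‖ ^ 2 ≤ ‖(A s).det‖ := fun s => by
    have : (A s).det = ((1 + s * ‖x‖ ^ 2 : ℝ) : 𝕜) := by
      simp [A, inner_self_eq_norm_sq_to_K, RCLike.real_smul_eq_coe_mul]
    rw [this, RCLike.norm_ofReal]
    exact le_abs_self _
  have hA0 : ∑ i, ‖A 0 (z i)‖ ^ p = 1 := by simpa [A, LinearMap.transvection.apply] using hsum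
  -- First-order optimality of `z` against the rank-one perturbations `A s = 1 + s ⟪x, ·⟫ x`.
  have hmin : IsLocalMin
      (fun s => (∑ i, ‖A s (z i)‖ ^ p) ^ (finrank 𝕜 E / p) - (1 + s * ‖x‖ ^ 2)) 0 :=
    Filter.Eventually.of_forall fun s => by
      simpa [hA0] using (hdetA s).trans (hdet (A s))
  have hderiv := ((hasDerivAt_sum_norm_transvection_rpow (𝕜 := 𝕜) hz p x).rpow_const
    (p := finrank 𝕜 E / p) (Or.inl (hA0.trans_ne one_ne_zero))).sub
    (((hasDerivAt_id (0 : ℝ)).mul_const (‖x‖ ^ 2)).const_add 1)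
  have hcrit := hmin.hasDerivAt_eq_zero hderiv
  simp only [A] at hA0
  rw [hA0, Real.one_rpow, one_mul, mul_one] at hcrit
  rcases subsingleton_or_nontrivial E with hE | hE
  · simp [Subsingleton.elim x 0]
  · have hrank : (finrank 𝕜 E : ℝ) ≠ 0 := Nat.cast_ne_zero.mpr finrank_pos.ne'
    rw [eq_div_iff hrank]
    field_simp at hcrit
    linear_combination hcrit

theorem exists_isLewisPosition_of_span_eq_top {v : ι → E} [Nonempty ι] (hv : ∀ i, v i ≠ 0)
    (hspan : Submodule.span 𝕜 (Set.range v) = ⊤) {p : ℝ} (hp : 0 < p) :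
    ∃ T : E →ₗ[𝕜] E, (∀ i, T (v i) ≠ 0) ∧ IsLewisPosition 𝕜 p (T ∘ v) := by
  obtain ⟨T, hT, hsum, hdet⟩ := exists_forall_norm_det_le_rpow hv hspan hp
  exact ⟨T, hT, isLewisPosition_of_norm_det_le_rpow hT hp.ne' hsum hdet⟩

theorem exists_isLewisPosition {V : Type*} [AddCommGroup V] [Module 𝕜 V] [Nonempty ι]
    {v : ι → V} (hv : ∀ i, v i ≠ 0) {p : ℝ} (hp : 0 < p) :
    ∃ T : V →ₗ[𝕜] EuclideanSpace 𝕜 (Fin (finrank 𝕜 (Submodule.span 𝕜 (Set.range v)))),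
      (∀ i, T (v i) ≠ 0) ∧ IsLewisPosition 𝕜 p (T ∘ v) := by
  set W := Submodule.span 𝕜 (Set.range v)
  have : FiniteDimensional 𝕜 W := FiniteDimensional.span_of_finite 𝕜 (Set.finite_range v)
  let e : W ≃ₗ[𝕜] EuclideanSpace 𝕜 (Fin (finrank 𝕜 W)) :=
    LinearEquiv.ofFinrankEq _ _ (by simp)
  let w : ι → W := fun i => ⟨v i, Submodule.subset_span ⟨i, rfl⟩⟩
  have hspan : Submodule.span 𝕜 (Set.range (e ∘ w)) = ⊤ := by
    have hw : Submodule.span 𝕜 (Set.range w) = ⊤ :=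
      (Submodule.span_range_subtype_eq_top_iff W fun i => Submodule.subset_span ⟨i, rfl⟩).mpr rfl
    rw [Set.range_comp, ← LinearEquiv.coe_coe, Submodule.span_image, hw, Submodule.map_top,
      LinearEquiv.range]
  obtain ⟨T, hT, hLewis⟩ := exists_isLewisPosition_of_span_eq_top
    (fun i => e.map_ne_zero_iff.mpr fun h => hv i (congrArg Subtype.val h)) hspan hp
  obtain ⟨f, hf⟩ := LinearMap.exists_extend (T ∘ₗ e.toLinearMap)
  have hfv : f ∘ v = T ∘ e ∘ w := funext fun i => LinearMap.congr_fun hf (w i)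
  exact ⟨f, fun i => (congrFun hfv i).trans_ne (hT i), hfv ▸ hLewis⟩

end LewisPosition

section LewisEnergy

variable {𝕜 E ι : Type*} [RCLike 𝕜] [NormedAddCommGroup E] [InnerProductSpace 𝕜 E]

variable (𝕜) in
/-- The `(x, y)` term of the isotropy identity of a family in Lewis position, paired with itself:
the squared modulus of the inner product, weighted by the densities of `x` and of `y`. -/
noncomputable def lewisEnergy (p : ℝ) (x y : E) : ℝ :=
  ‖x‖ ^ (p - 2) * ‖y‖ ^ (p - 2) * ‖⟪x, y⟫_𝕜‖ ^ 2

theorem lewisEnergy_nonneg (p : ℝ) (x y : E) : 0 ≤ lewisEnergy 𝕜 p x y := by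
  unfold lewisEnergy
  positivity

theorem lewisEnergy_self {x : E} (hx : x ≠ 0) (p : ℝ) : lewisEnergy 𝕜 p x x = (‖x‖ ^ p) ^ 2 := by
  rw [lewisEnergy, inner_self_eq_norm_sq_to_K, ← RCLike.ofReal_pow,
    RCLike.norm_of_nonneg (by positivity), ← rpow_sub_two_mul_sq (norm_ne_zero_iff.mpr hx) p]
  ring

theorem lewisEnergy_smul_smul {a b : 𝕜} (ha : a ≠ 0) (hb : b ≠ 0) (p : ℝ) (x y : E) :
    lewisEnergy 𝕜 p (a • x) (b • y) = ‖a‖ ^ p * ‖b‖ ^ p * lewisEnergy 𝕜 p x y := by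
  rw [lewisEnergy, inner_smul_left, inner_smul_right, norm_smul, norm_smul, norm_mul, norm_mul,
    RCLike.norm_conj, Real.mul_rpow (norm_nonneg _) (norm_nonneg _),
    Real.mul_rpow (norm_nonneg _) (norm_nonneg _),
    ← rpow_sub_two_mul_sq (norm_ne_zero_iff.mpr ha) p,
    ← rpow_sub_two_mul_sq (norm_ne_zero_iff.mpr hb) p, lewisEnergy]
  ring

theorem sq_mul_lewisEnergy_smul_smul_le {a b : 𝕜} (ha : a ≠ 0) (hb : b ≠ 0) {δ p : ℝ} (hδ : 0 < δ)
    (hap : ‖a‖ ^ p ≤ δ⁻¹) (hbp : ‖b‖ ^ p ≤ δ⁻¹) {x y : E} :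
    δ ^ 2 * lewisEnergy 𝕜 p (a • x) (b • y) ≤ lewisEnergy 𝕜 p x y := by
  have hone : ∀ t : ℝ, t ≤ δ⁻¹ → δ * t ≤ 1 := fun t ht =>
    (mul_le_mul_of_nonneg_left ht hδ.le).trans_eq (mul_inv_cancel₀ hδ.ne')
  calc δ ^ 2 * lewisEnergy 𝕜 p (a • x) (b • y)
      = δ * ‖a‖ ^ p * (δ * ‖b‖ ^ p) * lewisEnergy 𝕜 p x y := by
        rw [lewisEnergy_smul_smul ha hb]
        ring
    _ ≤ lewisEnergy 𝕜 p x y :=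
        mul_le_of_le_one_left (lewisEnergy_nonneg _ _ _)
          (mul_le_one₀ (hone _ hap) (by positivity) (hone _ hbp))

theorem IsLewisPosition.sum_lewisEnergy [Fintype ι] {p : ℝ} {z : ι → E}
    (h : IsLewisPosition 𝕜 p z) (hz : ∀ i, z i ≠ 0) :
    ∑ i, ∑ j, lewisEnergy 𝕜 p (z i) (z j) = 1 / finrank 𝕜 E := by
  have hrow : ∀ i, ∑ j, lewisEnergy 𝕜 p (z i) (z j) = ‖z i‖ ^ p / finrank 𝕜 E := fun i => by
    simp only [lewisEnergy, mul_assoc, ← mul_sum]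
    rw [h.isotropic, ← mul_div_assoc, rpow_sub_two_mul_sq (norm_ne_zero_iff.mpr (hz i))]
  simp only [hrow, ← sum_div, h.sum_norm_rpow]

theorem sum_offDiag_re_inner_of_sum_eq_zero {S : Finset ι} {z : ι → E}
    (hsum : ∑ i ∈ S, z i = 0) :
    ∑ q ∈ S.offDiag, RCLike.re ⟪z q.1, z q.2⟫_𝕜 = -∑ i ∈ S, ‖z i‖ ^ 2 := by
  classical
  have hall : ∑ q ∈ S ×ˢ S, RCLike.re ⟪z q.1, z q.2⟫_𝕜 = 0 := by
    rw [sum_product, ← map_zero (RCLike.re : 𝕜 →+ ℝ), ← inner_zero_left (∑ i ∈ S, z i), ← hsum,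
      sum_inner, map_sum]
    simp only [inner_sum, map_sum]
  have hdiag : ∑ q ∈ S.diag, RCLike.re ⟪z q.1, z q.2⟫_𝕜 = ∑ i ∈ S, ‖z i‖ ^ 2 := by
    simp only [sum_diag, inner_self_eq_norm_sq]
  rw [← diag_union_offDiag, sum_union (disjoint_diag_offDiag S), hdiag] at hall
  linarith

theorem sum_offDiag_mul_le (S : Finset ι) (s : ι → ℝ) :
    #S * ∑ q ∈ S.offDiag, s q.1 * s q.2 ≤ (#S - 1) * (∑ i ∈ S, s i) ^ 2 := by
  classical
  have hsplit : (∑ i ∈ S, s i) ^ 2 = ∑ i ∈ S, s i ^ 2 + ∑ q ∈ S.offDiag, s q.1 * s q.2 := by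
    rw [sq, sum_mul_sum, ← sum_product', ← diag_union_offDiag,
      sum_union (disjoint_diag_offDiag S), sum_diag]
    simp only [sq]
  have hcauchy : (∑ i ∈ S, s i) ^ 2 ≤ #S * ∑ i ∈ S, s i ^ 2 := sq_sum_le_card_mul_sum_sq
  linear_combination hcauchy - #S * hsplit

theorem sq_sum_norm_le_sum_offDiag_lewisEnergy {S : Finset ι} {z : ι → E}
    (hz : ∀ i ∈ S, z i ≠ 0) (hsum : ∑ i ∈ S, z i = 0) (p : ℝ) :
    (∑ i ∈ S, ‖z i‖ ^ 2) ^ 2 ≤ (∑ q ∈ S.offDiag, ‖z q.1‖ ^ (2 - p) * ‖z q.2‖ ^ (2 - p)) *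
      ∑ q ∈ S.offDiag, lewisEnergy 𝕜 p (z q.1) (z q.2) := by
  have hnorm : ∑ i ∈ S, ‖z i‖ ^ 2 ≤ ∑ q ∈ S.offDiag, ‖⟪z q.1, z q.2⟫_𝕜‖ := by
    rw [← neg_neg (∑ i ∈ S, ‖z i‖ ^ 2), ← sum_offDiag_re_inner_of_sum_eq_zero (𝕜 := 𝕜) hsum,
      ← sum_neg_distrib]
    exact sum_le_sum fun q _ => (neg_le_abs _).trans (RCLike.abs_re_le_norm _)
  refine (pow_le_pow_left₀ (by positivity) hnorm 2).trans
    (sum_sq_le_sum_mul_sum_of_sq_le_mul _ (fun _ _ => by positivity)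
      (fun _ _ => lewisEnergy_nonneg _ _ _) fun q hq => Eq.le ?_)
  obtain ⟨h1, h2, -⟩ := mem_offDiag.mp hq
  have hweight : ∀ i ∈ S, ‖z i‖ ^ (2 - p) * ‖z i‖ ^ (p - 2) = 1 := fun i hi => by
    rw [← Real.rpow_add (norm_pos_iff.mpr (hz i hi))]
    simp
  rw [lewisEnergy]
  linear_combination -‖⟪z q.1, z q.2⟫_𝕜‖ ^ 2 *
    (‖z q.2‖ ^ (2 - p) * ‖z q.2‖ ^ (p - 2) * hweight _ h1 + hweight _ h2)

theorem sq_sum_norm_rpow_le_sum_offDiag_lewisEnergy {S : Finset ι} {z : ι → E}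
    (hz : ∀ i ∈ S, z i ≠ 0) (hsum : ∑ i ∈ S, z i = 0) {p : ℝ} (hp : 0 ≤ p) (hp2 : p ≤ 2) :
    (∑ i ∈ S, ‖z i‖ ^ p) ^ 2 ≤
      #S * (#S - 1) * ∑ q ∈ S.offDiag, lewisEnergy 𝕜 p (z q.1) (z q.2) := by
  rcases S.eq_empty_or_nonempty with rfl | hS
  · simp
  have hmono : MonovaryOn (fun i => ‖z i‖ ^ p) (fun i => ‖z i‖ ^ (2 - p)) S := by
    intro i _ j _ hij
    exact Real.rpow_le_rpow (norm_nonneg _) (le_of_not_gt fun h => hij.not_ge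
      (Real.rpow_le_rpow (norm_nonneg _) h.le (by linarith))) hp
  have hchebyshev : (∑ i ∈ S, ‖z i‖ ^ p) * ∑ i ∈ S, ‖z i‖ ^ (2 - p) ≤ #S * ∑ i ∈ S, ‖z i‖ ^ 2 := by
    refine hmono.sum_mul_sum_le_card_mul_sum.trans_eq (congrArg _ (sum_congr rfl fun i hi => ?_))
    rw [← Real.rpow_add (norm_pos_iff.mpr (hz i hi)), add_sub_cancel, Real.rpow_two]
  have hpos : 0 < ∑ i ∈ S, ‖z i‖ ^ (2 - p) :=
    sum_pos (fun i hi => Real.rpow_pos_of_pos (norm_pos_iff.mpr (hz i hi)) _) hS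
  refine le_of_mul_le_mul_right ?_ (pow_pos hpos 2)
  calc (∑ i ∈ S, ‖z i‖ ^ p) ^ 2 * (∑ i ∈ S, ‖z i‖ ^ (2 - p)) ^ 2
      ≤ (#S * ∑ i ∈ S, ‖z i‖ ^ 2) ^ 2 := by
        rw [← mul_pow]
        exact pow_le_pow_left₀ (by positivity) hchebyshev 2
    _ ≤ #S * (#S * ∑ q ∈ S.offDiag, ‖z q.1‖ ^ (2 - p) * ‖z q.2‖ ^ (2 - p)) *
          ∑ q ∈ S.offDiag, lewisEnergy 𝕜 p (z q.1) (z q.2) := by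
        rw [mul_pow, sq, mul_assoc, mul_assoc, mul_assoc]
        gcongr
        exact sq_sum_norm_le_sum_offDiag_lewisEnergy hz hsum p
    _ ≤ #S * ((#S - 1) * (∑ i ∈ S, ‖z i‖ ^ (2 - p)) ^ 2) *
          ∑ q ∈ S.offDiag, lewisEnergy 𝕜 p (z q.1) (z q.2) := by
        exact mul_le_mul_of_nonneg_right
          (mul_le_mul_of_nonneg_left (sum_offDiag_mul_le S fun i => ‖z i‖ ^ (2 - p))
            (Nat.cast_nonneg _))
          (sum_nonneg fun _ _ => lewisEnergy_nonneg _ _ _)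
    _ = _ := by ring

theorem eventually_rpow_mem_Icc {a : ℝ} (ha : a ≠ 0) {δ : ℝ} (hδ0 : 0 < δ) (hδ1 : δ < 1) :
    ∀ᶠ p : ℝ in nhdsWithin 0 (Set.Ioi 0), a ^ p ∈ Set.Icc δ δ⁻¹ := by
  have hlim := (Real.continuousAt_const_rpow ha (b := 0)).tendsto
  rw [Real.rpow_zero] at hlim
  exact nhdsWithin_le_nhds (hlim (Icc_mem_nhds hδ1 ((one_lt_inv₀ hδ0).mpr hδ1)))

/-- As `p → 0` the coefficients of a dependence relation no longer affect the inequality. -/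
theorem eventually_sq_sum_norm_rpow_le_sum_offDiag_lewisEnergy {V : Type*} [AddCommGroup V]
    [Module 𝕜 V] {S : Finset ι} {v : ι → V} {a : ι → 𝕜} (ha : ∀ i ∈ S, a i ≠ 0)
    (hrel : ∑ i ∈ S, a i • v i = 0) {δ : ℝ} (hδ0 : 0 < δ) (hδ1 : δ < 1) :
    ∀ᶠ p : ℝ in nhdsWithin 0 (Set.Ioi 0), ∀ T : V →ₗ[𝕜] E, (∀ i ∈ S, T (v i) ≠ 0) →
      δ ^ 4 * (∑ i ∈ S, ‖T (v i)‖ ^ p) ^ 2 ≤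
        #S * (#S - 1) * ∑ q ∈ S.offDiag, lewisEnergy 𝕜 p (T (v q.1)) (T (v q.2)) := by
  rcases S.eq_empty_or_nonempty with rfl | hS
  · simp
  have hcard : (0 : ℝ) ≤ #S - 1 := by
    rw [sub_nonneg]
    exact_mod_cast hS.card_pos
  filter_upwards [(Filter.eventually_all_finset S).mpr fun i hi =>
      eventually_rpow_mem_Icc (norm_ne_zero_iff.mpr (ha i hi)) hδ0 hδ1,
    self_mem_nhdsWithin, nhdsWithin_le_nhds (Iic_mem_nhds two_pos)] with p hcoeff hp hp2 T hT
  have hrelT : ∑ i ∈ S, a i • T (v i) = 0 := by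
    simpa only [map_sum, map_smul, map_zero] using congrArg T hrel
  have hnorm : δ * ∑ i ∈ S, ‖T (v i)‖ ^ p ≤ ∑ i ∈ S, ‖a i • T (v i)‖ ^ p := by
    rw [mul_sum]
    refine sum_le_sum fun i hi => ?_
    rw [norm_smul, Real.mul_rpow (norm_nonneg _) (norm_nonneg _)]
    gcongr
    exact (hcoeff i hi).1
  have henergy : δ ^ 2 * ∑ q ∈ S.offDiag, lewisEnergy 𝕜 p (a q.1 • T (v q.1)) (a q.2 • T (v q.2)) ≤
      ∑ q ∈ S.offDiag, lewisEnergy 𝕜 p (T (v q.1)) (T (v q.2)) := by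
    rw [mul_sum]
    refine sum_le_sum fun q hq => ?_
    obtain ⟨h1, h2, -⟩ := mem_offDiag.mp hq
    exact sq_mul_lewisEnergy_smul_smul_le (ha _ h1) (ha _ h2) hδ0 (hcoeff _ h1).2 (hcoeff _ h2).2
  calc δ ^ 4 * (∑ i ∈ S, ‖T (v i)‖ ^ p) ^ 2 = δ ^ 2 * (δ * ∑ i ∈ S, ‖T (v i)‖ ^ p) ^ 2 := by ring
    _ ≤ δ ^ 2 * (#S * (#S - 1) *
          ∑ q ∈ S.offDiag, lewisEnergy 𝕜 p (a q.1 • T (v q.1)) (a q.2 • T (v q.2))) := by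
        gcongr
        exact (pow_le_pow_left₀ (by positivity) hnorm 2).trans
          (sq_sum_norm_rpow_le_sum_offDiag_lewisEnergy
            (fun i hi => smul_ne_zero (ha i hi) (hT i hi)) hrelT (Set.mem_Ioi.mp hp).le hp2)
    _ = #S * (#S - 1) * (δ ^ 2 *
          ∑ q ∈ S.offDiag, lewisEnergy 𝕜 p (a q.1 • T (v q.1)) (a q.2 • T (v q.2))) := by ring
    _ ≤ _ := mul_le_mul_of_nonneg_left henergy (mul_nonneg (Nat.cast_nonneg _) hcard)

end LewisEnergy

section Averaging

variable {ι : Type*}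

theorem sum_sum_offDiag_erase [DecidableEq ι] (L : Finset ι) (g : ι × ι → ℝ) :
    ∑ x ∈ L, ∑ q ∈ (L.erase x).offDiag, g q = (#L - 2) * ∑ q ∈ L.offDiag, g q := by
  have hcount : ∀ q ∈ L.offDiag, (#((L.erase q.1).erase q.2) : ℝ) = #L - 2 := fun q hq => by
    obtain ⟨h1, h2, h12⟩ := mem_offDiag.mp hq
    have h2' := mem_erase.mpr ⟨h12.symm, h2⟩
    rw [← card_erase_add_one h1, ← card_erase_add_one h2']
    push_cast
    ring
  rw [sum_comm' (t' := L.offDiag) (s' := fun q => (L.erase q.1).erase q.2), mul_sum]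
  · exact sum_congr rfl fun q hq => by rw [sum_const, nsmul_eq_mul, hcount q hq]
  · intro x q
    simp only [mem_offDiag, mem_erase]
    tauto

theorem sum_sq_sum_erase [DecidableEq ι] (L : Finset ι) (w : ι → ℝ) :
    ∑ x ∈ L, (∑ i ∈ L.erase x, w i) ^ 2 = (#L - 2) * (∑ i ∈ L, w i) ^ 2 + ∑ i ∈ L, w i ^ 2 := by
  have herase : ∀ x ∈ L, (∑ i ∈ L.erase x, w i) ^ 2
      = (∑ i ∈ L, w i) ^ 2 - 2 * (∑ i ∈ L, w i) * w x + w x ^ 2 := fun x hx => by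
    rw [sum_erase_eq_sub hx]
    ring
  rw [sum_congr rfl herase, sum_add_distrib, sum_sub_distrib, ← mul_sum, sum_const, nsmul_eq_mul]
  ring

theorem mul_sq_sum_le_sum_offDiag_of_card_eq_three {κ : ℝ} (hκ : 0 ≤ κ) (g : ι × ι → ℝ) (w : ι → ℝ)
    (L : Finset ι) (hL : 3 ≤ #L)
    (h : ∀ S ⊆ L, #S = 3 → κ * (∑ i ∈ S, w i) ^ 2 ≤ ∑ q ∈ S.offDiag, g q) :
    κ * (∑ i ∈ L, w i) ^ 2 ≤ ∑ q ∈ L.offDiag, g q := by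
  classical
  obtain ⟨N, hN⟩ : ∃ N, #L = N := ⟨_, rfl⟩
  rw [hN] at hL
  induction N, hL using Nat.le_induction generalizing L with
  | base => exact h L subset_rfl hN
  | succ N h3 ih =>
    have herase : ∀ x ∈ L, κ * (∑ i ∈ L.erase x, w i) ^ 2 ≤ ∑ q ∈ (L.erase x).offDiag, g q :=
      fun x hx => ih (L.erase x) (fun S hS => h S (hS.trans (erase_subset x L)))
        (by rw [card_erase_of_mem hx, hN, Nat.add_sub_cancel])
    have hsum := sum_le_sum herase
    rw [← mul_sum, sum_sq_sum_erase, sum_sum_offDiag_erase] at hsum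
    have hpos : (0 : ℝ) < #L - 2 := by
      have : (3 : ℝ) ≤ N := by exact_mod_cast h3
      rw [hN]
      push_cast
      linarith
    refine le_of_mul_le_mul_left ?_ hpos
    have := mul_nonneg hκ (sum_nonneg fun i (_ : i ∈ L) => sq_nonneg (w i))
    linarith

end Averaging

section LineSystem

variable {ι κ : Type*}

/-- A linear space with coloured points, as in the Edelstein–Kelly theorem: two points lie on at
most one line, points of different colours are joined by a line, and lines meet every colour. -/
structure IsColoredLineSystem (col : ι → κ) (𝓛 : Finset (Finset ι)) : Prop where
  surjective : Function.Surjective col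
  eq_of_mem : ∀ L ∈ 𝓛, ∀ L' ∈ 𝓛, ∀ i j, i ≠ j → i ∈ L → j ∈ L → i ∈ L' → j ∈ L' → L = L'
  exists_line : ∀ i j, col i ≠ col j → ∃ L ∈ 𝓛, i ∈ L ∧ j ∈ L
  exists_mem : ∀ L ∈ 𝓛, ∀ c, ∃ i ∈ L, col i = c

theorem IsColoredLineSystem.three_le_card {col : ι → κ} {𝓛 : Finset (Finset ι)}
    (h : IsColoredLineSystem col 𝓛) [Fintype κ] (hκ : 2 < Fintype.card κ)
    {L : Finset ι} (hL : L ∈ 𝓛) : 3 ≤ #L := by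
  classical
  have hsub : univ ⊆ L.image col := fun c _ => mem_image.mpr (h.exists_mem L hL c)
  exact (Nat.succ_le_of_lt hκ).trans ((card_le_card hsub).trans card_image_le)

open Classical in
/-- The lines of `𝓛`, viewed as sets of points, which pass through both `i` and `j`. -/
noncomputable def joiningLines (𝓛 : Finset (Finset ι)) (i j : ι) : Finset (Finset ι) :=
  {L ∈ 𝓛 | i ∈ L ∧ j ∈ L}

theorem mem_joiningLines {𝓛 : Finset (Finset ι)} {i j : ι} {L : Finset ι} :
    L ∈ joiningLines 𝓛 i j ↔ L ∈ 𝓛 ∧ i ∈ L ∧ j ∈ L := by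
  simp [joiningLines]

theorem sum_sum_mul_sum_eq_sum_card_joiningLines [Fintype ι] [DecidableEq κ]
    (𝓛 : Finset (Finset ι)) (col : ι → κ) (c d : κ) (u w : ι → ℝ) :
    ∑ L ∈ 𝓛, (∑ i ∈ L with col i = c, u i) * ∑ j ∈ L with col j = d, w j =
      ∑ q ∈ ({i | col i = c} : Finset ι) ×ˢ ({j | col j = d} : Finset ι),
        #(joiningLines 𝓛 q.1 q.2) * (u q.1 * w q.2) := by
  simp only [sum_mul_sum, ← sum_product']
  rw [sum_comm' (t' := ({i | col i = c} : Finset ι) ×ˢ ({j | col j = d} : Finset ι))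
    (s' := fun q => joiningLines 𝓛 q.1 q.2)]
  · simp only [sum_const, nsmul_eq_mul]
  · intro L q
    simp only [mem_product, mem_filter, mem_joiningLines, mem_univ, true_and]
    tauto

namespace IsColoredLineSystem

variable {col : ι → κ} {𝓛 : Finset (Finset ι)} (h : IsColoredLineSystem col 𝓛)
include h

theorem card_joiningLines_le_one {i j : ι} (hij : i ≠ j) : #(joiningLines 𝓛 i j) ≤ 1 := by
  refine card_le_one.mpr fun L hL L' hL' => ?_
  obtain ⟨hL, hi, hj⟩ := mem_joiningLines.mp hL
  obtain ⟨hL', hi', hj'⟩ := mem_joiningLines.mp hL'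
  exact h.eq_of_mem L hL L' hL' i j hij hi hj hi' hj'

theorem card_joiningLines_eq_one {i j : ι} (hij : col i ≠ col j) : #(joiningLines 𝓛 i j) = 1 := by
  obtain ⟨L, hL, hi, hj⟩ := h.exists_line i j hij
  exact le_antisymm (h.card_joiningLines_le_one fun hne => hij (congrArg col hne))
    (card_pos.mpr ⟨L, mem_joiningLines.mpr ⟨hL, hi, hj⟩⟩)

variable [Fintype ι]

theorem sum_sum_offDiag_le {g : ι × ι → ℝ} (hg : ∀ q, 0 ≤ g q) :
    ∑ L ∈ 𝓛, ∑ q ∈ L.offDiag, g q ≤ ∑ q ∈ univ.offDiag, g q := by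
  rw [sum_comm' (t' := univ.offDiag) (s' := fun q => joiningLines 𝓛 q.1 q.2)]
  · refine sum_le_sum fun q hq => ?_
    rw [sum_const, nsmul_eq_mul]
    exact mul_le_of_le_one_left (hg q)
      (by exact_mod_cast h.card_joiningLines_le_one (mem_offDiag.mp hq).2.2)
  · intro L q
    simp only [mem_offDiag, mem_joiningLines, mem_univ, true_and]
    tauto

section Colors

variable [DecidableEq κ]

theorem card_joiningLines_self_le {i : ι} {c : κ} (hic : col i ≠ c) :
    #(joiningLines 𝓛 i i) ≤ #{j | col j = c} := by
  have : Nonempty ι := ⟨i⟩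
  choose! k hkmem hkcol using fun L hL => h.exists_mem L hL c
  refine card_le_card_of_injOn k (fun L hL => ?_) fun L hL L' hL' hk => ?_
  · exact mem_filter.mpr ⟨mem_univ _, hkcol L (mem_joiningLines.mp hL).1⟩
  · obtain ⟨hL, hi, -⟩ := mem_joiningLines.mp hL
    obtain ⟨hL', hi', -⟩ := mem_joiningLines.mp hL'
    refine h.eq_of_mem L hL L' hL' i (k L) (fun hik => hic ?_) hi (hkmem L hL) hi' ?_
    · rw [hik, hkcol L hL]
    · exact hk ▸ hkmem L' hL'

theorem sum_mul_sum_of_ne {c d : κ} (hcd : c ≠ d) (u w : ι → ℝ) :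
    ∑ L ∈ 𝓛, (∑ i ∈ L with col i = c, u i) * ∑ j ∈ L with col j = d, w j =
      (∑ i with col i = c, u i) * ∑ j with col j = d, w j := by
  rw [sum_sum_mul_sum_eq_sum_card_joiningLines, sum_mul_sum, ← sum_product']
  refine sum_congr rfl fun q hq => ?_
  simp only [mem_product, mem_filter, mem_univ, true_and] at hq
  rw [h.card_joiningLines_eq_one (by rwa [hq.1, hq.2]), Nat.cast_one, one_mul]

theorem sum_card_sq_le {d e : κ} (hde : d ≠ e)
    (hcard : #{i | col i = e} ≤ #{i | col i = d}) :
    ∑ L ∈ 𝓛, (#{i ∈ L | col i = d} : ℝ) ^ 2 ≤ 2 * (#{i | col i = d} : ℝ) ^ 2 := by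
  classical
  have hcount : ∑ L ∈ 𝓛, (#{i ∈ L | col i = d} : ℝ) ^ 2 = ∑ q ∈ ({i | col i = d} : Finset ι) ×ˢ
      ({j | col j = d} : Finset ι), (#(joiningLines 𝓛 q.1 q.2) : ℝ) := by
    simpa only [sum_const, nsmul_eq_mul, mul_one, ← sq, one_pow] using
      sum_sum_mul_sum_eq_sum_card_joiningLines 𝓛 col d d (fun _ => 1) fun _ => 1
  rw [hcount, ← diag_union_offDiag, sum_union (disjoint_diag_offDiag _), sum_diag, two_mul]
  refine add_le_add ?_ ?_
  · rw [sq]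
    refine (sum_le_card_nsmul _ _ (#{i | col i = d} : ℝ) fun i hi => ?_).trans_eq (nsmul_eq_mul _ _)
    have hie : col i ≠ e := (mem_filter.mp hi).2.trans_ne hde
    exact_mod_cast (h.card_joiningLines_self_le hie).trans hcard
  · refine (sum_le_card_nsmul _ _ (1 : ℝ) fun q hq => ?_).trans ?_
    · exact_mod_cast h.card_joiningLines_le_one (mem_offDiag.mp hq).2.2
    · rw [offDiag_card, nsmul_eq_mul, mul_one, sq]
      exact_mod_cast Nat.sub_le _ _

theorem sq_sum_le_two_mul_sum_sq_of_card_le {c d e : κ} (hcd : c ≠ d) (hde : d ≠ e)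
    (hcard : #{i | col i = e} ≤ #{i | col i = d}) (w : ι → ℝ) :
    (∑ i with col i = c, w i) ^ 2 ≤ 2 * ∑ L ∈ 𝓛, (∑ i ∈ L with col i = c, w i) ^ 2 := by
  have hpos : (0 : ℝ) < #{i | col i = d} := by
    obtain ⟨i, hi⟩ := h.surjective d
    exact_mod_cast card_pos.mpr ⟨i, mem_filter.mpr ⟨mem_univ i, hi⟩⟩
  have hcross := h.sum_mul_sum_of_ne hcd w fun _ => 1
  simp only [sum_const, nsmul_eq_mul, mul_one] at hcross
  refine le_of_mul_le_mul_right ?_ (pow_pos hpos 2)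
  calc (∑ i with col i = c, w i) ^ 2 * (#{i | col i = d} : ℝ) ^ 2
      ≤ (∑ L ∈ 𝓛, (∑ i ∈ L with col i = c, w i) ^ 2) * ∑ L ∈ 𝓛, (#{i ∈ L | col i = d} : ℝ) ^ 2 := by
        rw [← mul_pow, ← hcross]
        exact sum_mul_sq_le_sq_mul_sq _ _ _
    _ ≤ (∑ L ∈ 𝓛, (∑ i ∈ L with col i = c, w i) ^ 2) * (2 * (#{i | col i = d} : ℝ) ^ 2) := by
        gcongr
        exact h.sum_card_sq_le hde hcard
    _ = _ := by ring

end Colors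

theorem sq_sum_le_two_mul_sum_sq [Fintype κ] (hκ : 2 < Fintype.card κ) {w : ι → ℝ}
    (hw : ∀ i, 0 ≤ w i) : (∑ i, w i) ^ 2 ≤ 2 * ∑ L ∈ 𝓛, (∑ i ∈ L, w i) ^ 2 := by
  have : DecidableEq κ := Classical.decEq κ
  have hcolor : ∀ c, (∑ i with col i = c, w i) ^ 2 ≤
      2 * ∑ L ∈ 𝓛, (∑ i ∈ L with col i = c, w i) ^ 2 := fun c => by
    obtain ⟨d, hd, e, he, hde⟩ := Finset.one_lt_card.mp (show 1 < #(univ.erase c) by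
      rw [card_erase_of_mem (mem_univ c), card_univ]
      omega)
    rcases le_total #{i | col i = e} #{i | col i = d} with hle | hle
    · exact h.sq_sum_le_two_mul_sum_sq_of_card_le (ne_of_mem_erase hd).symm hde hle w
    · exact h.sq_sum_le_two_mul_sum_sq_of_card_le (ne_of_mem_erase he).symm hde.symm hle w
  have hsplit : ∀ L : Finset ι, (∑ i ∈ L, w i) ^ 2 =
      ∑ c, ∑ d, (∑ i ∈ L with col i = c, w i) * ∑ j ∈ L with col j = d, w j := fun L => by
    rw [sq, ← sum_mul_sum, sum_fiberwise]
  have hpair : ∀ c d, (∑ i with col i = c, w i) * ∑ j with col j = d, w j ≤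
      2 * ∑ L ∈ 𝓛, (∑ i ∈ L with col i = c, w i) * ∑ j ∈ L with col j = d, w j := fun c d => by
    rcases eq_or_ne c d with rfl | hcd
    · simpa only [sq] using hcolor c
    · rw [h.sum_mul_sum_of_ne hcd]
      exact le_mul_of_one_le_left (mul_nonneg (sum_nonneg fun i _ => hw i)
        (sum_nonneg fun i _ => hw i)) one_le_two
  calc (∑ i, w i) ^ 2
      = ∑ c, ∑ d, (∑ i with col i = c, w i) * ∑ j with col j = d, w j := hsplit univ
    _ ≤ ∑ c, ∑ d, 2 * ∑ L ∈ 𝓛, (∑ i ∈ L with col i = c, w i) * ∑ j ∈ L with col j = d, w j :=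
      sum_le_sum fun c _ => sum_le_sum fun d _ => hpair c d
    _ = 2 * ∑ L ∈ 𝓛, (∑ i ∈ L, w i) ^ 2 := by
      simp only [hsplit]
      rw [sum_comm (s := 𝓛), mul_sum]
      refine sum_congr rfl fun c _ => ?_
      rw [sum_comm (s := 𝓛), mul_sum]

end IsColoredLineSystem

end LineSystem

section EdelsteinKelly

theorem exists_one_lt_add_pow {ε : ℝ} (hε : 0 < ε) (n : ℕ) :
    ∃ δ ∈ Set.Ioo (0 : ℝ) 1, 1 < ε + δ ^ n := by
  have hlim : Filter.Tendsto (fun δ : ℝ => ε + δ ^ n) (nhdsWithin 1 (Set.Iio 1))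
      (nhds (ε + 1 ^ n)) :=
    (Continuous.tendsto (by fun_prop) 1).mono_left nhdsWithin_le_nhds
  obtain ⟨δ, hlt, hδ⟩ := ((hlim.eventually_const_lt (u := 1) (by simpa using hε)).and
    (Ioo_mem_nhdsLT one_pos)).exists
  exact ⟨δ, hδ, hlt⟩

section Bound

variable {𝕜 ι κ : Type*} [RCLike 𝕜] [Fintype κ] {col : ι → κ} {𝓛 : Finset (Finset ι)}

theorem IsLewisPosition.one_div_card_add_le [Fintype ι] {E : Type*} [NormedAddCommGroup E]
    [InnerProductSpace 𝕜 E] {p : ℝ} {z : ι → E} (hLewis : IsLewisPosition 𝕜 p z)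
    (hz : ∀ i, z i ≠ 0) (h : IsColoredLineSystem col 𝓛) (hκ : 2 < Fintype.card κ) {c : ℝ}
    (hc : 0 ≤ c) (htriple : ∀ L ∈ 𝓛, ∀ S ⊆ L, #S = 3 → c * (∑ i ∈ S, ‖z i‖ ^ p) ^ 2 ≤
      ∑ q ∈ S.offDiag, lewisEnergy 𝕜 p (z q.1) (z q.2)) :
    1 / Fintype.card ι + c / 2 ≤ (1 / finrank 𝕜 E : ℝ) := by
  classical
  have hdiag : 1 / Fintype.card ι ≤ ∑ i, lewisEnergy 𝕜 p (z i) (z i) := by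
    have hcauchy := sq_sum_le_card_mul_sum_sq (s := univ) (f := fun i => ‖z i‖ ^ p)
    rw [hLewis.sum_norm_rpow, one_pow, card_univ] at hcauchy
    simp only [lewisEnergy_self (hz _)]
    exact div_le_of_le_mul₀ (Nat.cast_nonneg _) (by positivity) (by rwa [mul_comm])
  have hoffDiag : c / 2 ≤ ∑ q ∈ univ.offDiag, lewisEnergy 𝕜 p (z q.1) (z q.2) :=
    calc c / 2 = c / 2 * (∑ i, ‖z i‖ ^ p) ^ 2 := by rw [hLewis.sum_norm_rpow, one_pow, mul_one]
      _ ≤ c / 2 * (2 * ∑ L ∈ 𝓛, (∑ i ∈ L, ‖z i‖ ^ p) ^ 2) := by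
        gcongr
        exact h.sq_sum_le_two_mul_sum_sq hκ fun i => by positivity
      _ = ∑ L ∈ 𝓛, c * (∑ i ∈ L, ‖z i‖ ^ p) ^ 2 := by
        rw [← mul_sum]
        ring
      _ ≤ ∑ L ∈ 𝓛, ∑ q ∈ L.offDiag, lewisEnergy 𝕜 p (z q.1) (z q.2) :=
        sum_le_sum fun L hL => mul_sq_sum_le_sum_offDiag_of_card_eq_three hc _ _ L
          (h.three_le_card hκ hL) (htriple L hL)
      _ ≤ _ := h.sum_sum_offDiag_le fun q => lewisEnergy_nonneg p (z q.1) (z q.2)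
  rw [← hLewis.sum_lewisEnergy hz, ← sum_product', ← diag_union_offDiag,
    sum_union (disjoint_diag_offDiag _), sum_diag]
  exact add_le_add hdiag hoffDiag

theorem IsColoredLineSystem.finrank_span_lt_twelve [Finite ι] {V : Type*} [AddCommGroup V]
    [Module 𝕜 V]
    (h : IsColoredLineSystem col 𝓛) (hκ : 2 < Fintype.card κ) {v : ι → V} (hv : ∀ i, v i ≠ 0)
    (hrel : ∀ L ∈ 𝓛, ∀ S ⊆ L, #S = 3 →
      ∃ a : ι → 𝕜, (∀ i ∈ S, a i ≠ 0) ∧ ∑ i ∈ S, a i • v i = 0) :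
    finrank 𝕜 (Submodule.span 𝕜 (Set.range v)) < 12 := by
  have := Fintype.ofFinite ι
  obtain ⟨c⟩ : Nonempty κ := Fintype.card_pos_iff.mp (by omega)
  obtain ⟨i₀, -⟩ := h.surjective c
  have : Nonempty ι := ⟨i₀⟩
  obtain ⟨δ, ⟨hδ0, hδ1⟩, hδ⟩ :=
    exists_one_lt_add_pow (show (0 : ℝ) < 12 * (1 / Fintype.card ι) by positivity) 4
  have htriples : ∀ᶠ p : ℝ in nhdsWithin 0 (Set.Ioi 0), ∀ L ∈ 𝓛, ∀ S ∈ L.powerset, #S = 3 → _ :=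
    (Filter.eventually_all_finset 𝓛).mpr fun L hL =>
      (Filter.eventually_all_finset _).mpr fun S hS => Filter.eventually_imp_distrib_left.mpr
        fun hcard => by
          obtain ⟨a, ha, hsum⟩ := hrel L hL S (mem_powerset.mp hS) hcard
          exact eventually_sq_sum_norm_rpow_le_sum_offDiag_lewisEnergy
            (E := EuclideanSpace 𝕜 (Fin (finrank 𝕜 (Submodule.span 𝕜 (Set.range v)))))
            ha hsum hδ0 hδ1
  obtain ⟨p, hp, hp0⟩ := (htriples.and self_mem_nhdsWithin).exists
  obtain ⟨T, hT, hLewis⟩ := exists_isLewisPosition (𝕜 := 𝕜) hv hp0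
  have hbound := hLewis.one_div_card_add_le hT h hκ (c := δ ^ 4 / 6) (by positivity)
    fun L hL S hS hcard => by
      have hS3 := hp L hL S (mem_powerset.mpr hS) hcard T fun i _ => hT i
      rw [hcard] at hS3
      push_cast at hS3
      simp only [Function.comp_apply]
      linarith
  rw [finrank_euclideanSpace_fin] at hbound
  have htwelve : (1 / 12 : ℝ) < 1 / finrank 𝕜 (Submodule.span 𝕜 (Set.range v)) := by linarith
  exact_mod_cast lt_of_one_div_lt_one_div (by norm_num) htwelve

end Bound

theorem span_pair_eq_of_linearIndependent {K V : Type*} [DivisionRing K] [AddCommGroup V]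
    [Module K V] {x y a b : V} (hxy : LinearIndependent K ![x, y])
    (hx : x ∈ Submodule.span K {a, b}) (hy : y ∈ Submodule.span K {a, b}) :
    Submodule.span K {x, y} = Submodule.span K {a, b} := by
  classical
  have : FiniteDimensional K (Submodule.span K {a, b}) :=
    FiniteDimensional.span_of_finite K (Set.toFinite _)
  refine Submodule.eq_of_le_of_finrank_le (Submodule.span_le.mpr ?_) ?_
  · rintro _ (rfl | rfl) <;> assumption
  · have hcard := finrank_span_eq_card hxy
    rw [Matrix.range_cons_cons_empty, Fintype.card_fin] at hcard
    rw [hcard, ← coe_pair]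
    exact (finrank_span_finset_le_card _).trans card_le_two

theorem linearIndependent_pair_of_span_singleton_ne {K V : Type*} [DivisionRing K]
    [AddCommGroup V] [Module K V] {x y : V} (hx : x ≠ 0) (hy : y ≠ 0)
    (hxy : Submodule.span K {x} ≠ Submodule.span K {y}) : LinearIndependent K ![x, y] := by
  refine (LinearIndependent.pair_iff' hx).mpr fun a => ?_
  rintro rfl
  exact hxy (Submodule.span_singleton_smul_eq (smul_ne_zero_iff.mp hy).1.isUnit x).symm

theorem exists_sum_smul_eq_zero_of_card_eq_three {K V ι : Type*} [DivisionRing K] [AddCommGroup V]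
    [Module K V] {v : ι → V} {S : Finset ι} (hcard : #S = 3)
    (hpair : ∀ i j, i ≠ j → LinearIndependent K ![v i, v j]) {a b : V}
    (hS : ∀ i ∈ S, v i ∈ Submodule.span K {a, b}) :
    ∃ c : ι → K, (∀ i ∈ S, c i ≠ 0) ∧ ∑ i ∈ S, c i • v i = 0 := by
  classical
  obtain ⟨i, j, k, hij, hik, hjk, rfl⟩ := card_eq_three.mp hcard
  have hk : v k ∈ Submodule.span K {v i, v j} := by
    rw [span_pair_eq_of_linearIndependent (hpair i j hij) (hS i (by simp)) (hS j (by simp))]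
    exact hS k (by simp)
  obtain ⟨x, y, hxy⟩ := Submodule.mem_span_pair.mp hk
  have hx : x ≠ 0 := by
    rintro rfl
    refine one_ne_zero (LinearIndependent.pair_iff.mp (hpair k j hjk.symm) 1 (-y) ?_).1
    simp [← hxy]
  have hy : y ≠ 0 := by
    rintro rfl
    refine one_ne_zero (LinearIndependent.pair_iff.mp (hpair k i hik.symm) 1 (-x) ?_).1
    simp [← hxy]
  refine ⟨fun t => if t = i then x else if t = j then y else -1, fun t _ => ?_, ?_⟩
  · dsimp only
    split_ifs
    exacts [hx, hy, neg_ne_zero.mpr one_ne_zero]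
  · simp [hij, hij.symm, hik, hik.symm, hjk, hjk.symm, ← hxy]

variable {𝕜 V ι κ : Type*} [RCLike 𝕜] [AddCommGroup V] [Module 𝕜 V] {col : ι → κ} {v : ι → V}

variable (𝕜 col v) in
/-- The hypothesis of the Edelstein–Kelly theorem for the points of projective space represented by
the vectors `v i`: points of different colours are distinct, and the line through them meets every
colour class. -/
structure IsEdelsteinKelly : Prop where
  surjective : Function.Surjective col
  linearIndependent : ∀ i j, col i ≠ col j → LinearIndependent 𝕜 ![v i, v j]
  exists_mem_span : ∀ i j c, col i ≠ col j →
    ∃ k, col k = c ∧ v k ∈ Submodule.span 𝕜 {v i, v j}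

variable (𝕜 col v) in
open Classical in
/-- The projective lines through points of different colours, as sets of indices. -/
noncomputable def coloredLines [Fintype ι] : Finset (Finset ι) :=
  {L | ∃ i j, col i ≠ col j ∧ ∀ k, k ∈ L ↔ v k ∈ Submodule.span 𝕜 {v i, v j}}

theorem mem_coloredLines [Fintype ι] {L : Finset ι} : L ∈ coloredLines 𝕜 col v ↔
    ∃ i j, col i ≠ col j ∧ ∀ k, k ∈ L ↔ v k ∈ Submodule.span 𝕜 {v i, v j} := by
  simp [coloredLines]

namespace IsEdelsteinKelly

theorem isColoredLineSystem [Fintype ι] (h : IsEdelsteinKelly 𝕜 col v)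
    (hpair : ∀ i j, i ≠ j → LinearIndependent 𝕜 ![v i, v j]) :
    IsColoredLineSystem col (coloredLines 𝕜 col v) where
  surjective := h.surjective
  eq_of_mem L hL L' hL' i j hij hi hj hi' hj' := by
    obtain ⟨a, b, -, hab⟩ := mem_coloredLines.mp hL
    obtain ⟨a', b', -, hab'⟩ := mem_coloredLines.mp hL'
    ext k
    rw [hab] at hi hj
    rw [hab'] at hi' hj'
    rw [hab, hab', ← span_pair_eq_of_linearIndependent (hpair i j hij) hi hj,
      span_pair_eq_of_linearIndependent (hpair i j hij) hi' hj']
  exists_line i j hij := by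
    classical
    refine ⟨({k | v k ∈ Submodule.span 𝕜 {v i, v j}} : Finset ι),
      mem_coloredLines.mpr ⟨i, j, hij, by simp⟩, ?_, ?_⟩ <;>
    exact mem_filter.mpr ⟨mem_univ _, Submodule.subset_span (by simp)⟩
  exists_mem L hL c := by
    obtain ⟨i, j, hij, hL⟩ := mem_coloredLines.mp hL
    obtain ⟨k, hk, hkspan⟩ := h.exists_mem_span i j c hij
    exact ⟨k, (hL k).mpr hkspan, hk⟩

theorem ne_zero [Fintype κ] (hκ : 2 < Fintype.card κ) (h : IsEdelsteinKelly 𝕜 col v) (i : ι) :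
    v i ≠ 0 := by
  obtain ⟨c, hc⟩ := Fintype.exists_ne_of_one_lt_card (by omega) (col i)
  obtain ⟨j, rfl⟩ := h.surjective c
  exact (h.linearIndependent i j hc.symm).ne_zero 0

theorem finrank_span_lt_twelve_of_pairwise [Finite ι] [Fintype κ] (hκ : 2 < Fintype.card κ)
    (h : IsEdelsteinKelly 𝕜 col v) (hpair : ∀ i j, i ≠ j → LinearIndependent 𝕜 ![v i, v j]) :
    finrank 𝕜 (Submodule.span 𝕜 (Set.range v)) < 12 := by
  have := Fintype.ofFinite ι
  refine (h.isColoredLineSystem hpair).finrank_span_lt_twelve hκ (𝕜 := 𝕜) (h.ne_zero hκ)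
    fun L hL S hS hcard => ?_
  obtain ⟨i, j, -, hL⟩ := mem_coloredLines.mp hL
  exact exists_sum_smul_eq_zero_of_card_eq_three hcard hpair fun k hk => (hL k).mp (hS hk)

theorem finrank_span_lt_twelve [Finite ι] [Fintype κ] (hκ : 2 < Fintype.card κ)
    (h : IsEdelsteinKelly 𝕜 col v) : finrank 𝕜 (Submodule.span 𝕜 (Set.range v)) < 12 := by
  let point : Setoid ι := Setoid.ker fun i => Submodule.span 𝕜 {v i}
  let rep (i : ι) : ι := (⟦i⟧ : Quotient point).out
  have hrep : ∀ i, Submodule.span 𝕜 {v (rep i)} = Submodule.span 𝕜 {v i} := fun i =>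
    Quotient.mk_out (s := point) i
  have hpair : ∀ i j, Submodule.span 𝕜 {v i} ≠ Submodule.span 𝕜 {v j} →
      LinearIndependent 𝕜 ![v i, v j] := fun i j =>
    linearIndependent_pair_of_span_singleton_ne (h.ne_zero hκ i) (h.ne_zero hκ j)
  have hcol : ∀ i, col (rep i) = col i := fun i => by
    by_contra hne
    obtain ⟨a, ha⟩ := Submodule.mem_span_singleton.mp
      ((hrep i).ge (Submodule.mem_span_singleton_self (v i)))
    exact (LinearIndependent.pair_iff' (h.ne_zero hκ _)).mp (h.linearIndependent _ _ hne) a ha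
  have hspan : Submodule.span 𝕜 (Set.range fun q : Quotient point => v q.out) =
      Submodule.span 𝕜 (Set.range v) := by
    refine le_antisymm (Submodule.span_mono (Set.range_subset_iff.mpr fun q => ⟨q.out, rfl⟩))
      (Submodule.span_le.mpr (Set.range_subset_iff.mpr fun i => ?_))
    exact Submodule.span_mono
      (Set.singleton_subset_iff.mpr (Set.mem_range_self (⟦i⟧ : Quotient point)))
      ((hrep i).ge (Submodule.mem_span_singleton_self _))
  rw [← hspan]
  refine finrank_span_lt_twelve_of_pairwise (col := fun q : Quotient point => col q.out) hκ
    ⟨fun c => ?_, fun q q' hq => h.linearIndependent _ _ hq, fun q q' c hq => ?_⟩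
    fun q q' hq => hpair _ _ fun heq => hq (Quotient.out_equiv_out.mp heq)
  · obtain ⟨i, rfl⟩ := h.surjective c
    exact ⟨⟦i⟧, hcol i⟩
  · obtain ⟨k, rfl, hk⟩ := h.exists_mem_span q.out q'.out c hq
    refine ⟨⟦k⟧, hcol k, ?_⟩
    exact Submodule.span_le.mpr (Set.singleton_subset_iff.mpr hk)
      ((hrep k).le (Submodule.mem_span_singleton_self _))

end IsEdelsteinKelly

end EdelsteinKelly

section Forms

open MvPolynomial

section Ring

variable {σ R : Type*} [CommRing R] {a b f : MvPolynomial σ R} {m n p q : ℕ}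

theorem homogeneousComponent_mul_of_le (ha : a.IsHomogeneous p) (hpm : p ≤ m)
    (u : MvPolynomial σ R) :
    homogeneousComponent m (u * a) = homogeneousComponent (m - p) u * a := by
  let _ : GradedAlgebra (homogeneousSubmodule σ R) := MvPolynomial.gradedAlgebra
  have h := DirectSum.coe_decompose_mul_of_right_mem_of_le (homogeneousSubmodule σ R)
    (a := u) ha hpm
  exact (decomposition.decompose'_apply (u * a) m).symm.trans
    (h.trans (congrArg (· * a) (decomposition.decompose'_apply u (m - p))))

theorem homogeneousComponent_mul_of_lt (ha : a.IsHomogeneous p) (hmp : m < p)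
    (u : MvPolynomial σ R) : homogeneousComponent m (u * a) = 0 := by
  let _ : GradedAlgebra (homogeneousSubmodule σ R) := MvPolynomial.gradedAlgebra
  have h := DirectSum.coe_decompose_mul_of_right_mem_of_not_le (homogeneousSubmodule σ R)
    (a := u) ha hmp.not_ge
  exact (decomposition.decompose'_apply (u * a) m).symm.trans h

theorem homogeneousComponent_add_mul (ha : a.totalDegree ≤ m) (hb : b.totalDegree ≤ n) :
    homogeneousComponent (m + n) (a * b) =
      homogeneousComponent m a * homogeneousComponent n b := by
  have hsum : a * b = ∑ k ∈ range (b.totalDegree + 1), a * homogeneousComponent k b := by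
    rw [← mul_sum, sum_homogeneousComponent]
  have hterm (k : ℕ) (hk : k ≤ n) : homogeneousComponent (m + n) (a * homogeneousComponent k b) =
      homogeneousComponent (m + n - k) a * homogeneousComponent k b :=
    homogeneousComponent_mul_of_le (homogeneousComponent_isHomogeneous k b) (by lia) a
  rw [hsum, map_sum, sum_eq_single n]
  · rw [hterm n le_rfl, Nat.add_sub_cancel]
  · intro k hk hkn
    have hkb : k ≤ n := (Nat.lt_succ_iff.mp (mem_range.mp hk)).trans hb
    rw [hterm k hkb, homogeneousComponent_eq_zero _ a (by lia), zero_mul]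
  · intro hn
    rw [homogeneousComponent_eq_zero n b (by simpa using hn), mul_zero, map_zero]

theorem exists_isHomogeneous_of_mem_span_pair (ha : a.IsHomogeneous p) (hb : b.IsHomogeneous q)
    (hf : f.IsHomogeneous m) (hmem : f ∈ Ideal.span {a, b}) :
    ∃ u v : MvPolynomial σ R, u.IsHomogeneous (m - p) ∧ v.IsHomogeneous (m - q) ∧
      (m < p → u = 0) ∧ (m < q → v = 0) ∧ f = u * a + v * b := by
  have coefficient {a : MvPolynomial σ R} {p : ℕ} (ha : a.IsHomogeneous p)
      (u : MvPolynomial σ R) : ∃ u' : MvPolynomial σ R, u'.IsHomogeneous (m - p) ∧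
        (m < p → u' = 0) ∧ homogeneousComponent m (u * a) = u' * a := by
    rcases lt_or_ge m p with hmp | hpm
    · exact ⟨0, isHomogeneous_zero _ _ _, fun _ => rfl,
        by rw [homogeneousComponent_mul_of_lt ha hmp, zero_mul]⟩
    · exact ⟨_, homogeneousComponent_isHomogeneous _ u, fun h => absurd h hpm.not_gt,
        homogeneousComponent_mul_of_le ha hpm u⟩
  obtain ⟨u, v, rfl⟩ := Ideal.mem_span_pair.mp hmem
  obtain ⟨u', hu', hu0, hu⟩ := coefficient ha u
  obtain ⟨v', hv', hv0, hv⟩ := coefficient hb v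
  exact ⟨u', v', hu', hv', hu0, hv0,
    by rw [← hu, ← hv, ← map_add, homogeneousComponent_eq_self hf]⟩

theorem eq_zero_of_mem_span_pair_of_lt (ha : a.IsHomogeneous p) (hb : b.IsHomogeneous q)
    (hf : f.IsHomogeneous m) (hp : m < p) (hq : m < q) (hmem : f ∈ Ideal.span {a, b}) :
    f = 0 := by
  obtain ⟨u, v, -, -, hu, hv, rfl⟩ := exists_isHomogeneous_of_mem_span_pair ha hb hf hmem
  rw [hu hp, hv hq, zero_mul, zero_mul, add_zero]

theorem exists_eq_C_of_isHomogeneous_zero (ha : a.IsHomogeneous 0) : ∃ c : R, a = C c :=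
  ⟨_, totalDegree_eq_zero_iff_eq_C.mp ((totalDegree_zero_iff_isHomogeneous σ).mpr ha)⟩

theorem exists_C_mul_add_C_mul_of_mem_span_pair (ha : a.IsHomogeneous m) (hb : b.IsHomogeneous m)
    (hf : f.IsHomogeneous m) (hmem : f ∈ Ideal.span {a, b}) :
    ∃ r s : R, f = C r * a + C s * b := by
  obtain ⟨u, v, hu, hv, -, -, rfl⟩ := exists_isHomogeneous_of_mem_span_pair ha hb hf hmem
  rw [Nat.sub_self] at hu hv
  obtain ⟨r, rfl⟩ := exists_eq_C_of_isHomogeneous_zero hu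
  obtain ⟨s, rfl⟩ := exists_eq_C_of_isHomogeneous_zero hv
  exact ⟨r, s, rfl⟩

end Ring

section Field

variable {σ K : Type*} [Field K] {a b f q q' : MvPolynomial σ K} {m : ℕ}

theorem not_isUnit_of_isHomogeneous (hm : m ≠ 0) (hf : f.IsHomogeneous m) : ¬ IsUnit f := fun h =>
  hm ((hf.totalDegree h.ne_zero).symm.trans (isUnit_iff_totalDegree_of_isReduced.mp h).2)

theorem totalDegree_pos_of_not_isUnit (h0 : f ≠ 0) (hf : ¬ IsUnit f) : 0 < f.totalDegree := by
  refine Nat.pos_of_ne_zero fun hdeg => hf ?_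
  have hC := totalDegree_eq_zero_iff_eq_C.mp hdeg
  refine isUnit_iff_totalDegree_of_isReduced.mpr ⟨IsUnit.mk0 _ fun hcoeff => h0 ?_, hdeg⟩
  rw [hC, hcoeff, C_0]

theorem not_irreducible_mul_of_isHomogeneous_one (ha : a.IsHomogeneous 1)
    (hb : b.IsHomogeneous 1) : ¬ Irreducible (a * b) := fun h =>
  (h.isUnit_or_isUnit rfl).elim (not_isUnit_of_isHomogeneous one_ne_zero ha)
    (not_isUnit_of_isHomogeneous one_ne_zero hb)

theorem prime_of_isHomogeneous_one (ha : a.IsHomogeneous 1) (h0 : a ≠ 0) : Prime a := by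
  refine Irreducible.prime ⟨not_isUnit_of_isHomogeneous one_ne_zero ha, fun x y hxy => ?_⟩
  by_contra! hunit
  have hx : x ≠ 0 := left_ne_zero_of_mul (hxy ▸ h0)
  have hy : y ≠ 0 := right_ne_zero_of_mul (hxy ▸ h0)
  have hdeg := ha.totalDegree h0
  rw [hxy, totalDegree_mul_of_isDomain hx hy] at hdeg
  have := totalDegree_pos_of_not_isUnit hx hunit.1
  have := totalDegree_pos_of_not_isUnit hy hunit.2
  lia

theorem exists_isHomogeneous_one_mul_of_not_irreducible (hq : q.IsHomogeneous 2) (h0 : q ≠ 0)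
    (hirr : ¬ Irreducible q) :
    ∃ b c : MvPolynomial σ K, b.IsHomogeneous 1 ∧ c.IsHomogeneous 1 ∧ q = b * c := by
  obtain ⟨x, y, hx, hy, hxy⟩ :=
    (irreducible_or_factor (not_isUnit_of_isHomogeneous two_ne_zero hq)).resolve_left hirr
  have hx0 : x ≠ 0 := left_ne_zero_of_mul (hxy ▸ h0)
  have hy0 : y ≠ 0 := right_ne_zero_of_mul (hxy ▸ h0)
  have hdeg := hq.totalDegree h0
  rw [hxy, totalDegree_mul_of_isDomain hx0 hy0] at hdeg
  have := totalDegree_pos_of_not_isUnit hx0 hx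
  have := totalDegree_pos_of_not_isUnit hy0 hy
  refine ⟨_, _, homogeneousComponent_isHomogeneous 1 x, homogeneousComponent_isHomogeneous 1 y, ?_⟩
  rw [← homogeneousComponent_add_mul (by lia) (by lia), ← hxy, homogeneousComponent_eq_self hq]

end Field

section Elimination

variable {σ R : Type*} [CommRing R]

/-- The substitution `X i ↦ X i - f (X i) * u`, which sends every linear form `p` to
`p - f p * u`. It is used to eliminate a linear form `u` with `f u = 1`. -/
noncomputable def transvectionAlgHom (f : MvPolynomial σ R →ₗ[R] R) (u : MvPolynomial σ R) :
    MvPolynomial σ R →ₐ[R] MvPolynomial σ R :=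
  aeval fun i => X i - C (f (X i)) * u

variable {f : MvPolynomial σ R →ₗ[R] R} {u p : MvPolynomial σ R} {m : ℕ}

theorem transvectionAlgHom_of_isHomogeneous_one (hp : p.IsHomogeneous 1) :
    transvectionAlgHom f u p = p - C (f p) * u := by
  let transvection : MvPolynomial σ R →ₗ[R] MvPolynomial σ R := LinearMap.id - f.smulRight u
  have hX : Set.EqOn (transvectionAlgHom f u).toLinearMap transvection
      (Set.range (X : σ → MvPolynomial σ R)) := by
    rintro _ ⟨i, rfl⟩
    simp [transvection, transvectionAlgHom, smul_eq_C_mul]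
  have hmem : p ∈ Submodule.span R (Set.range X) :=
    homogeneousSubmodule_one_eq_span_X (σ := σ) (R := R) ▸ hp
  simpa [transvection, smul_eq_C_mul] using LinearMap.eqOn_span' hX hmem

theorem sub_transvectionAlgHom_mem_span : p - transvectionAlgHom f u p ∈ Ideal.span {u} := by
  have hcomp : Ideal.Quotient.mkₐ R (Ideal.span {u}) =
      (Ideal.Quotient.mkₐ R (Ideal.span {u})).comp (transvectionAlgHom f u) := by
    ext i
    refine Ideal.Quotient.eq.mpr ?_
    simpa [transvectionAlgHom] using
      Ideal.mul_mem_left _ (C (f (X i))) (Ideal.mem_span_singleton_self u)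
  exact Ideal.Quotient.eq.mp (DFunLike.congr_fun hcomp p)

theorem isHomogeneous_transvectionAlgHom (hu : u.IsHomogeneous 1) (hp : p.IsHomogeneous m) :
    (transvectionAlgHom f u p).IsHomogeneous m := by
  rw [← one_mul m]
  exact hp.aeval _ fun i => (isHomogeneous_X R i).sub (hu.C_mul _)

variable {K : Type*} [Field K]

theorem exists_algHom_eliminating {W : Submodule K (MvPolynomial σ K)} {a : MvPolynomial σ K}
    (ha : a.IsHomogeneous 1) (hW : W ≤ homogeneousSubmodule σ K 1) (haW : a ∉ W) :
    ∃ φ : MvPolynomial σ K →ₐ[K] MvPolynomial σ K, φ a = 0 ∧ (∀ p ∈ W, φ p = p) ∧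
      (∀ p, p - φ p ∈ Ideal.span {a}) ∧ ∀ p m, p.IsHomogeneous m → (φ p).IsHomogeneous m := by
  obtain ⟨f, hfa, hfW⟩ := Submodule.exists_le_ker_of_notMem haW
  refine ⟨transvectionAlgHom f (C (f a)⁻¹ * a), ?_, fun p hp => ?_, fun p => ?_, fun p m hp =>
    isHomogeneous_transvectionAlgHom (ha.C_mul _) hp⟩
  · rw [transvectionAlgHom_of_isHomogeneous_one ha, ← mul_assoc, ← C_mul, mul_inv_cancel₀ hfa,
      C_1, one_mul, sub_self]
  · rw [transvectionAlgHom_of_isHomogeneous_one (hW hp), LinearMap.mem_ker.mp (hfW hp), C_0,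
      zero_mul, sub_zero]
  · exact Ideal.span_singleton_le_span_singleton.mpr (dvd_mul_left a _)
      sub_transvectionAlgHom_mem_span

theorem comap_span_singleton_eq_span_pair {A : Type*} [CommRing A] {φ : A →+* A} {a g : A}
    (ha : φ a = 0) (hφ : ∀ p, p - φ p ∈ Ideal.span {a}) :
    (Ideal.span {φ g}).comap φ = Ideal.span {a, g} := by
  have hle : Ideal.span {a} ≤ Ideal.span {a, g} := Ideal.span_mono (by simp)
  refine le_antisymm (fun p hp => ?_) (Ideal.span_le.mpr ?_)
  · obtain ⟨c, hc⟩ := Ideal.mem_span_singleton'.mp (Ideal.mem_comap.mp hp)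
    have hp' : p = (p - φ p) + c * (g - (g - φ g)) := by rw [sub_sub_cancel, hc, sub_add_cancel]
    rw [hp']
    exact add_mem (hle (hφ p)) (Ideal.mul_mem_left _ _
      (sub_mem (Ideal.subset_span (by simp)) (hle (hφ g))))
  · rintro _ (rfl | rfl)
    · simp [ha]
    · exact Ideal.mem_span_singleton_self _

end Elimination

section Quadrics

variable {σ K : Type*} [Field K] {a b c m m' q q' s t s' t' : MvPolynomial σ K}
  {V : Submodule K (MvPolynomial σ K)}

theorem isPrime_span_singleton_of_isHomogeneous_one (ha : a.IsHomogeneous 1) :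
    (Ideal.span {a}).IsPrime := by
  rcases eq_or_ne a 0 with rfl | h0
  · simpa using Ideal.isPrime_bot
  · exact (Ideal.span_singleton_prime h0).mpr (prime_of_isHomogeneous_one ha h0)

theorem exists_algHom_eliminating_of_ne_zero (ha : a.IsHomogeneous 1) (h0 : a ≠ 0) :
    ∃ φ : MvPolynomial σ K →ₐ[K] MvPolynomial σ K, (∀ p, p - φ p ∈ Ideal.span {a}) ∧
      (∀ p m, p.IsHomogeneous m → (φ p).IsHomogeneous m) ∧
      ∀ g, (Ideal.span {φ g}).comap φ = Ideal.span {a, g} := by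
  obtain ⟨φ, hφa, -, hφ, hhom⟩ := exists_algHom_eliminating ha bot_le (by simpa using h0)
  exact ⟨φ, hφ, hhom, fun g => comap_span_singleton_eq_span_pair (φ := φ.toRingHom) hφa hφ⟩

theorem isPrime_span_pair_of_isHomogeneous_one (ha : a.IsHomogeneous 1)
    (hb : b.IsHomogeneous 1) : (Ideal.span {a, b}).IsPrime := by
  rcases eq_or_ne a 0 with rfl | h0
  · simpa [Ideal.span_insert] using isPrime_span_singleton_of_isHomogeneous_one hb
  · obtain ⟨φ, -, hhom, hcomap⟩ := exists_algHom_eliminating_of_ne_zero ha h0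
    have := isPrime_span_singleton_of_isHomogeneous_one (hhom b 1 hb)
    exact hcomap b ▸ Ideal.comap_isPrime φ _

theorem exists_eq_mul_add_mul_of_not_isPrime (ha : a.IsHomogeneous 1) (hq : q.IsHomogeneous 2)
    (h0 : a ≠ 0) (hdvd : ¬ a ∣ q) (hprime : ¬ (Ideal.span {a, q}).IsPrime) :
    ∃ m b c : MvPolynomial σ K, m.IsHomogeneous 1 ∧ b.IsHomogeneous 1 ∧ c.IsHomogeneous 1 ∧
      q = a * m + b * c := by
  obtain ⟨φ, hφ, hhom, hcomap⟩ := exists_algHom_eliminating_of_ne_zero ha h0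
  have hφq : φ q ≠ 0 := fun h =>
    hdvd (Ideal.mem_span_singleton.mp (by simpa [h] using hφ q))
  have hirr : ¬ Irreducible (φ q) := fun h => by
    have := (Ideal.span_singleton_prime hφq).mpr h.prime
    exact hprime (hcomap q ▸ Ideal.comap_isPrime φ _)
  obtain ⟨b, c, hb, hc, hbc⟩ :=
    exists_isHomogeneous_one_mul_of_not_irreducible (hhom q 2 hq) hφq hirr
  have hmem : q - φ q ∈ Ideal.span {a, 0} := Ideal.span_mono (by simp) (hφ q)
  obtain ⟨m, _, hm, -, -, -, hqm⟩ := exists_isHomogeneous_of_mem_span_pair ha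
    (isHomogeneous_zero σ K 2) (hq.sub (hhom q 2 hq)) hmem
  exact ⟨m, b, c, hm, hb, hc, by rw [← hbc]; linear_combination hqm⟩

theorem not_isPrime_span_pair_of_mem_span_linear (hq : q.IsHomogeneous 2)
    (hq' : q'.IsHomogeneous 2) (hirr : Irreducible q) (hdvd : ¬ q ∣ q') (ha : a.IsHomogeneous 1)
    (hb : b.IsHomogeneous 1) (h0 : a ≠ 0) (hmem : q ∈ Ideal.span {a, b})
    (hmem' : q' ∈ Ideal.span {a, b}) : ¬ (Ideal.span {q, q'}).IsPrime := fun hprime => by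
  obtain ⟨m, c, hm, hc, -, -, hqab⟩ := exists_isHomogeneous_of_mem_span_pair ha hb hq hmem
  obtain ⟨m', c', hm', hc', -, -, hqab'⟩ := exists_isHomogeneous_of_mem_span_pair ha hb hq' hmem'
  -- Cramer's rule: both `a` and `b` times the determinant lie in `(q, q')`.
  have hcramer : a * (m * c' - m' * c) = c' * q - c * q' := by rw [hqab, hqab']; ring
  have hdet : m * c' - m' * c ∈ Ideal.span {q, q'} := by
    refine (hprime.mem_or_mem (hcramer ▸ Ideal.mem_span_pair.mpr ⟨c', -c, by ring⟩)).resolve_left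
      fun h => h0 (eq_zero_of_mem_span_pair_of_lt hq hq' ha one_lt_two one_lt_two h)
  obtain ⟨μ, ν, hμν⟩ := exists_C_mul_add_C_mul_of_mem_span_pair hq hq'
    ((hm.mul hc').sub (hm'.mul hc)) hdet
  have hsyzygy : q * (c' - C μ * a) = (c + C ν * a) * q' := by
    rw [hμν] at hcramer
    linear_combination -hcramer
  have hlin : (c + C ν * a).IsHomogeneous 1 := hc.add (ha.C_mul ν)
  rcases hirr.prime.dvd_or_dvd (hsyzygy ▸ dvd_mul_right q _) with h | h
  · have hzero : c + C ν * a = 0 := by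
      by_contra hne
      have hdeg := totalDegree_le_of_dvd_of_isDomain h hne
      rw [hq.totalDegree hirr.ne_zero, hlin.totalDegree hne] at hdeg
      lia
    have hfactor : q = a * (m - C ν * b) := by rw [hqab]; linear_combination b * hzero
    exact not_irreducible_mul_of_isHomogeneous_one ha (hm.sub (hb.C_mul ν)) (hfactor ▸ hirr)
  · exact hdvd h

theorem mem_of_irreducible_of_mem_adjoin (hV : V ≤ homogeneousSubmodule σ K 1)
    (hqV : q ∈ Algebra.adjoin K (V : Set (MvPolynomial σ K))) (hirr : Irreducible q)
    (ha : a.IsHomogeneous 1) (hb : b.IsHomogeneous 1) (hc : c.IsHomogeneous 1)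
    (hq : q = a * m + b * c) : a ∈ V := by
  by_contra haV
  obtain ⟨φ, hφa, hφV, -, hhom⟩ := exists_algHom_eliminating ha hV haV
  have hfix : φ q = q := AlgHom.adjoin_le_equalizer φ (AlgHom.id K _) hφV hqV
  have hsplit : q = φ b * φ c := by
    rw [← hfix, hq, map_add, map_mul, map_mul, hφa, zero_mul, zero_add]
  exact not_irreducible_mul_of_isHomogeneous_one (hhom b 1 hb) (hhom c 1 hc) (hsplit ▸ hirr)

theorem mem_of_mul_add_mul_eq (hV : V ≤ homogeneousSubmodule σ K 1) (hm : m.IsHomogeneous 1)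
    (hs : s ∈ V) (ht : t ∈ V) (hs' : s' ∈ V) (ht' : t' ∈ V) (hdvd : ¬ s ∣ s' * t')
    (heq : a * m + s * t = s * m' + s' * t') : m ∈ V := by
  by_contra hmV
  obtain ⟨φ, hφm, hφV, -, -⟩ := exists_algHom_eliminating hm hV hmV
  have h := congrArg φ heq
  simp only [map_add, map_mul, hφm, hφV _ hs, hφV _ ht, hφV _ hs', hφV _ ht', mul_zero,
    zero_add] at h
  exact hdvd ⟨t - φ m', by linear_combination -h⟩

end Quadrics

end Forms

section TranscendenceDegree

variable {ι K A : Type*} [Field K] [CommRing A] [Algebra K A]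

theorem card_le_finrank_of_algebraicIndependent_of_mem_adjoin [Fintype ι] {x : ι → A}
    {V : Submodule K A} [FiniteDimensional K V] (hx : AlgebraicIndependent K x)
    (hmem : ∀ i, x i ∈ Algebra.adjoin K (V : Set A)) : Fintype.card ι ≤ finrank K V := by
  let b := finBasis K V
  let f : MvPolynomial (Fin (finrank K V)) K →ₐ[K] A := MvPolynomial.aeval fun i => (b i : A)
  have hspan : Submodule.span K (Set.range fun i => (b i : A)) = V := by
    have himage := Submodule.map_span V.subtype (Set.range b)
    rw [b.span_eq, Submodule.map_subtype_top, ← Set.range_comp] at himage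
    exact himage.symm
  have hadjoin : Algebra.adjoin K (V : Set A) = f.range :=
    (congrArg (fun W : Submodule K A => Algebra.adjoin K (W : Set A)) hspan).symm.trans
      ((Algebra.adjoin_span ..).trans (Algebra.adjoin_range_eq_range_aeval K _))
  have hx' : AlgebraicIndependent K fun i => (⟨x i, hadjoin ▸ hmem i⟩ : f.range) :=
    AlgebraicIndependent.of_comp f.range.val hx
  have hcard := hx'.lift_cardinalMk_le_trdeg
  have htrdeg := lift_trdeg_le_of_surjective f.rangeRestrict f.rangeRestrict_surjective
  simp only [MvPolynomial.trdeg_of_isDomain, Cardinal.mk_fin, Cardinal.lift_natCast,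
    Cardinal.lift_le_nat_iff] at htrdeg
  simp only [Cardinal.mk_fintype, Cardinal.lift_natCast, Cardinal.nat_le_lift_iff] at hcard
  exact_mod_cast hcard.trans htrdeg

end TranscendenceDegree

section Circuit

open MvPolynomial

/-- The part of the hypotheses on a `ΣΠΣΠ(3,2)` circuit that the argument uses, `l i x` being the
`x`-th factor of the `i`-th branch. The Sylvester–Gallai condition `exists_mem` is in radical form:
on the variety cut out by one factor from each of two branches, a factor of the third vanishes. -/
structure IsSGCircuit {σ K : Type*} [Field K] {ι : Fin 3 → Type*}
    (l : (i : Fin 3) → ι i → MvPolynomial σ K) : Prop where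
  irreducible : ∀ i x, Irreducible (l i x)
  isHomogeneous : ∀ i x, (l i x).IsHomogeneous 1 ∨ (l i x).IsHomogeneous 2
  not_dvd : ∀ {i j}, i ≠ j → ∀ x y, ¬ l i x ∣ l j y
  exists_mem : ∀ {i j k}, i ≠ j → k ≠ i → k ≠ j → ∀ (x : ι i) (y : ι j)
    (P : Ideal (MvPolynomial σ K)), P.IsPrime → l i x ∈ P → l j y ∈ P → ∃ z, l k z ∈ P
  isPrime_span : ∀ {i j}, i ≠ j → ∀ x y, (l i x).IsHomogeneous 2 → (l j y).IsHomogeneous 2 →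
    (Ideal.span {l i x, l j y}).IsPrime
  exists_quadratic : ∃ i j x y, i ≠ j ∧ (l i x).IsHomogeneous 2 ∧ (l j y).IsHomogeneous 2

variable {σ K : Type*} [Field K] {ι : Fin 3 → Type*} {l : (i : Fin 3) → ι i → MvPolynomial σ K}

/-- The span of the factors of degree one in the branches `i ∈ J`. -/
noncomputable def linearFactorSpan (l : (i : Fin 3) → ι i → MvPolynomial σ K) (J : Set (Fin 3)) :
    Submodule K (MvPolynomial σ K) :=
  Submodule.span K {p | p.IsHomogeneous 1 ∧ ∃ i ∈ J, ∃ x, l i x = p}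

theorem linearFactorSpan_le_homogeneousSubmodule (J : Set (Fin 3)) :
    linearFactorSpan l J ≤ homogeneousSubmodule σ K 1 :=
  Submodule.span_le.mpr fun _ hp => hp.1

theorem mem_linearFactorSpan {i : Fin 3} {J : Set (Fin 3)} {x : ι i} (hi : i ∈ J)
    (hx : (l i x).IsHomogeneous 1) : l i x ∈ linearFactorSpan l J :=
  Submodule.subset_span ⟨hx, i, hi, x, rfl⟩

namespace IsSGCircuit

variable {i j k : Fin 3} {x : ι i} {y : ι j} {z : ι k}

theorem exists_mem_pencil (h : IsSGCircuit l) (hij : i ≠ j) (hki : k ≠ i) (hkj : k ≠ j)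
    (hx : (l i x).IsHomogeneous 2) (hy : (l j y).IsHomogeneous 2) :
    ∃ z, (l k z).IsHomogeneous 2 ∧ ∃ μ ν : K, l k z = C μ * l i x + C ν * l j y := by
  obtain ⟨z, hz⟩ := h.exists_mem hij hki hkj x y _ (h.isPrime_span hij x y hx hy)
    (Ideal.subset_span (by simp)) (Ideal.subset_span (by simp))
  rcases h.isHomogeneous k z with hdeg | hdeg
  · exact absurd (eq_zero_of_mem_span_pair_of_lt hx hy hdeg one_lt_two one_lt_two hz)
      (h.irreducible k z).ne_zero
  · exact ⟨z, hdeg, exists_C_mul_add_C_mul_of_mem_span_pair hx hy hdeg hz⟩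

theorem exists_isHomogeneous_two (h : IsSGCircuit l) (k : Fin 3) :
    ∃ z, (l k z).IsHomogeneous 2 := by
  obtain ⟨i, j, x, y, hij, hx, hy⟩ := h.exists_quadratic
  rcases eq_or_ne k i with rfl | hki
  · exact ⟨x, hx⟩
  rcases eq_or_ne k j with rfl | hkj
  · exact ⟨y, hy⟩
  obtain ⟨z, hz, -⟩ := h.exists_mem_pencil hij hki hkj hx hy
  exact ⟨z, hz⟩

theorem notMem_span_linear_quadratic (h : IsSGCircuit l) (hki : k ≠ i) (hkj : k ≠ j)
    (hx : (l i x).IsHomogeneous 1) (hy : (l j y).IsHomogeneous 2) :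
    l k z ∉ Ideal.span {l i x, l j y} := fun hmem => by
  rcases h.isHomogeneous k z with hz | hz
  · obtain ⟨u, v, -, -, -, hv, heq⟩ := exists_isHomogeneous_of_mem_span_pair hx hy hz hmem
    rw [hv one_lt_two, zero_mul, add_zero] at heq
    exact h.not_dvd hki.symm x z ⟨u, heq.trans (mul_comm _ _)⟩
  · obtain ⟨u, v, hu, -, -, -, heq⟩ := exists_isHomogeneous_of_mem_span_pair hx hy hz hmem
    have hux : u * l i x ∈ Ideal.span {l j y, l k z} :=
      Ideal.mem_span_pair.mpr ⟨-v, 1, by rw [heq]; ring⟩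
    have hu0 : u = 0 := by
      refine eq_zero_of_mem_span_pair_of_lt hy hz hu one_lt_two one_lt_two
        (((h.isPrime_span hkj.symm y z hy hz).mem_or_mem hux).resolve_right fun hmem => ?_)
      exact (h.irreducible i x).ne_zero
        (eq_zero_of_mem_span_pair_of_lt hy hz hx one_lt_two one_lt_two hmem)
    rw [hu0, zero_mul, zero_add] at heq
    exact h.not_dvd hkj.symm y z ⟨v, heq.trans (mul_comm _ _)⟩

theorem exists_linear_factor_of_eq (h : IsSGCircuit l) (hij : i ≠ j) (hki : k ≠ i) (hkj : k ≠ j)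
    (hx : (l i x).IsHomogeneous 1) (hy : (l j y).IsHomogeneous 2) {m b c : MvPolynomial σ K}
    (hb : b.IsHomogeneous 1) (heq : l j y = l i x * m + b * c) :
    ∃ z, (l k z).IsHomogeneous 1 ∧ ∃ α β : K, b = C α * l i x + C β * l k z := by
  have hy' : l j y ∈ Ideal.span {l i x, b} :=
    Ideal.mem_span_pair.mpr ⟨m, c, by rw [heq]; ring⟩
  obtain ⟨z, hz⟩ := h.exists_mem hij hki hkj x y _ (isPrime_span_pair_of_isHomogeneous_one hx hb)
    (Ideal.subset_span (by simp)) hy'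
  rcases h.isHomogeneous k z with hdeg | hdeg
  · obtain ⟨μ, ν, hzν⟩ := exists_C_mul_add_C_mul_of_mem_span_pair hx hb hdeg hz
    have hν : ν ≠ 0 := by
      rintro rfl
      exact h.not_dvd hki.symm x z ⟨C μ, by rw [hzν, C_0]; ring⟩
    have hνinv : (C ν⁻¹ : MvPolynomial σ K) * C ν = 1 := by rw [← C_mul, inv_mul_cancel₀ hν, C_1]
    refine ⟨z, hdeg, -(ν⁻¹ * μ), ν⁻¹, ?_⟩
    rw [hzν, C_neg, C_mul]
    linear_combination -b * hνinv
  · exact absurd (h.isPrime_span hkj.symm y z hy hdeg)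
      (not_isPrime_span_pair_of_mem_span_linear hy hdeg (h.irreducible j y)
        (h.not_dvd hkj.symm y z) hx hb (h.irreducible i x).ne_zero hy' hz)

theorem exists_eq_linear_mul_add (h : IsSGCircuit l) (hij : i ≠ j) (hki : k ≠ i) (hkj : k ≠ j)
    (hx : (l i x).IsHomogeneous 1) (hy : (l j y).IsHomogeneous 2) :
    ∃ (s t : ι k) (m : MvPolynomial σ K) (γ : K), (l k s).IsHomogeneous 1 ∧
      (l k t).IsHomogeneous 1 ∧ m.IsHomogeneous 1 ∧ γ ≠ 0 ∧
      l j y = l i x * m + C γ * l k s * l k t := by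
  have hnotprime : ¬ (Ideal.span {l i x, l j y}).IsPrime := fun hprime => by
    obtain ⟨z, hz⟩ := h.exists_mem hij hki hkj x y _ hprime
      (Ideal.subset_span (by simp)) (Ideal.subset_span (by simp))
    exact h.notMem_span_linear_quadratic hki hkj hx hy hz
  obtain ⟨m, b, c, hm, hb, hc, heq⟩ := exists_eq_mul_add_mul_of_not_isPrime hx hy
    (h.irreducible i x).ne_zero (h.not_dvd hij x y) hnotprime
  obtain ⟨s, hs, α, β, hbs⟩ := h.exists_linear_factor_of_eq hij hki hkj hx hy hb heq
  obtain ⟨t, ht, α', β', hct⟩ := h.exists_linear_factor_of_eq hij hki hkj hx hy hc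
    (heq.trans (by rw [mul_comm b]))
  have heq' : l j y = l i x * (m + C α * c + C (α' * β) * l k s) +
      C (β * β') * l k s * l k t := by
    rw [heq, hbs, hct, C_mul, C_mul]
    ring
  refine ⟨s, t, _, β * β', hs, ht, (hm.add (hc.C_mul α)).add (hs.C_mul _), fun hγ => ?_, heq'⟩
  exact h.not_dvd hij x y ⟨_, heq'.trans (by rw [hγ, C_0, zero_mul, zero_mul, add_zero])⟩

theorem exists_isHomogeneous_one (h : IsSGCircuit l) (hx : (l i x).IsHomogeneous 1)
    (k : Fin 3) : ∃ z, (l k z).IsHomogeneous 1 := by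
  rcases eq_or_ne k i with rfl | hki
  · exact ⟨x, hx⟩
  obtain ⟨j, hji, hjk⟩ := Fin.exists_ne_and_ne_of_two_lt i k (by decide)
  obtain ⟨y, hy⟩ := h.exists_isHomogeneous_two j
  obtain ⟨s, -, -, -, hs, -⟩ := h.exists_eq_linear_mul_add hji.symm hki hjk.symm hx hy
  exact ⟨s, hs⟩

theorem exists_linearFactorSpan_compl_le_span (h : IsSGCircuit l)
    (hlin : ∃ i x, (l i x).IsHomogeneous 1) (j : Fin 3) :
    ∃ S : Finset (MvPolynomial σ K), #S ≤ 4 ∧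
      linearFactorSpan l {j}ᶜ ≤ Submodule.span K (S : Set (MvPolynomial σ K)) := by
  classical
  obtain ⟨i₀, x₀, hx₀⟩ := hlin
  obtain ⟨i, hij⟩ := exists_ne j
  obtain ⟨k, hki, hkj⟩ := Fin.exists_ne_and_ne_of_two_lt i j (by decide)
  obtain ⟨x, hx⟩ := h.exists_isHomogeneous_one hx₀ i
  obtain ⟨y, hy⟩ := h.exists_isHomogeneous_two j
  obtain ⟨s, t, m, γ, hs, ht, hm, -, heq⟩ := h.exists_eq_linear_mul_add hij hki hkj hx hy
  let S : Finset (MvPolynomial σ K) := {l i x, m, l k s, l k t}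
  have hS : Submodule.span K (S : Set (MvPolynomial σ K)) ≤ homogeneousSubmodule σ K 1 := by
    refine Submodule.span_le.mpr fun p hp => ?_
    obtain rfl | rfl | rfl | rfl : p = l i x ∨ p = m ∨ p = l k s ∨ p = l k t := by
      simpa [S] using hp
    exacts [hx, hm, hs, ht]
  have hadjoin (p) (hp : p ∈ S) : p ∈ Algebra.adjoin K
      (Submodule.span K (S : Set (MvPolynomial σ K)) : Set (MvPolynomial σ K)) :=
    Algebra.subset_adjoin (Submodule.subset_span hp)
  have hyS : l j y ∈ Algebra.adjoin K
      (Submodule.span K (S : Set (MvPolynomial σ K)) : Set (MvPolynomial σ K)) := by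
    rw [heq, mul_assoc, ← smul_eq_C_mul]
    exact add_mem (mul_mem (hadjoin _ (by simp [S])) (hadjoin _ (by simp [S])))
      (Subalgebra.smul_mem _ (mul_mem (hadjoin _ (by simp [S])) (hadjoin _ (by simp [S]))) γ)
  refine ⟨S, card_le_four, Submodule.span_le.mpr ?_⟩
  rintro _ ⟨hx', i', hi'j, x', rfl⟩
  obtain ⟨k', hk'i', hk'j⟩ := Fin.exists_ne_and_ne_of_two_lt i' j (by decide)
  obtain ⟨s', t', m', γ', hs', ht', -, -, heq'⟩ :=
    h.exists_eq_linear_mul_add hi'j hk'i' hk'j hx' hy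
  exact mem_of_irreducible_of_mem_adjoin hS hyS (h.irreducible j y) hx' (hs'.C_mul γ') ht' heq'

theorem finiteDimensional_and_finrank_linearFactorSpan_le (h : IsSGCircuit l)
    (hlin : ∃ i x, (l i x).IsHomogeneous 1) :
    FiniteDimensional K (linearFactorSpan l Set.univ) ∧
      finrank K (linearFactorSpan l Set.univ) ≤ 8 := by
  classical
  obtain ⟨S, hS, hspanS⟩ := h.exists_linearFactorSpan_compl_le_span hlin 0
  obtain ⟨T, hT, hspanT⟩ := h.exists_linearFactorSpan_compl_le_span hlin 1
  have hle : linearFactorSpan l Set.univ ≤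
      Submodule.span K ((S ∪ T : Finset (MvPolynomial σ K)) : Set (MvPolynomial σ K)) := by
    rw [coe_union, Submodule.span_union]
    refine Submodule.span_le.mpr ?_
    rintro _ ⟨hx, i, -, x, rfl⟩
    rcases eq_or_ne i 0 with rfl | hi
    · exact Submodule.mem_sup_right (hspanT (mem_linearFactorSpan (by simp) hx))
    · exact Submodule.mem_sup_left (hspanS (mem_linearFactorSpan hi hx))
  refine ⟨Submodule.finiteDimensional_of_le hle, ?_⟩
  calc finrank K (linearFactorSpan l Set.univ)
      ≤ finrank K (Submodule.span K
          ((S ∪ T : Finset (MvPolynomial σ K)) : Set (MvPolynomial σ K))) :=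
        Submodule.finrank_mono hle
    _ ≤ #(S ∪ T) := finrank_span_finset_le_card _
    _ ≤ #S + #T := card_union_le S T
    _ ≤ 8 := Nat.add_le_add hS hT

theorem mem_adjoin_linearFactorSpan (h : IsSGCircuit l) (hlin : ∃ i x, (l i x).IsHomogeneous 1)
    (j : Fin 3) (y : ι j) : l j y ∈
      Algebra.adjoin K (linearFactorSpan l Set.univ : Set (MvPolynomial σ K)) := by
  have hmem {i : Fin 3} {x : ι i} (hx : (l i x).IsHomogeneous 1) :
      l i x ∈ linearFactorSpan l Set.univ := mem_linearFactorSpan trivial hx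
  rcases h.isHomogeneous j y with hy | hy
  · exact Algebra.subset_adjoin (hmem hy)
  obtain ⟨i₀, x₀, hx₀⟩ := hlin
  obtain ⟨i, hij⟩ := exists_ne j
  obtain ⟨k, hki, hkj⟩ := Fin.exists_ne_and_ne_of_two_lt i j (by decide)
  obtain ⟨x, hx⟩ := h.exists_isHomogeneous_one hx₀ i
  obtain ⟨s, t, m, γ, hs, ht, hm, -, heq⟩ := h.exists_eq_linear_mul_add hij hki hkj hx hy
  obtain ⟨s', t', m', γ', hs', ht', -, hγ', heq'⟩ :=
    h.exists_eq_linear_mul_add hkj hki.symm hij hs hy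
  have hscale {p : MvPolynomial σ K} (c : K) (hp : p ∈ linearFactorSpan l Set.univ) :
      C c * p ∈ linearFactorSpan l Set.univ := smul_eq_C_mul p c ▸ Submodule.smul_mem _ c hp
  have hdvd : ¬ l k s ∣ C γ' * l i s' * l i t' := fun hdvd => by
    have hunit : IsUnit (C γ' : MvPolynomial σ K) := (isUnit_iff_ne_zero.mpr hγ').map C
    rw [mul_assoc, hunit.dvd_mul_left] at hdvd
    exact ((h.irreducible k s).prime.dvd_or_dvd hdvd).elim (h.not_dvd hki s s')
      (h.not_dvd hki s t')
  have hmV : m ∈ linearFactorSpan l Set.univ := by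
    refine mem_of_mul_add_mul_eq (a := l i x) (s := l k s) (t := C γ * l k t) (m' := m')
      (linearFactorSpan_le_homogeneousSubmodule _) hm (hmem hs) (hscale γ (hmem ht))
      (hscale γ' (hmem hs')) (hmem ht') hdvd ?_
    rw [← heq', heq]
    ring
  rw [heq, mul_assoc, ← smul_eq_C_mul]
  exact add_mem (mul_mem (Algebra.subset_adjoin (hmem hx)) (Algebra.subset_adjoin hmV))
    (Subalgebra.smul_mem _ (mul_mem (Algebra.subset_adjoin (hmem hs))
      (Algebra.subset_adjoin (hmem ht))) γ)

theorem isEdelsteinKelly {𝕜 : Type*} [RCLike 𝕜] {l : (i : Fin 3) → ι i → MvPolynomial σ 𝕜}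
    (h : IsSGCircuit l) (hquad : ∀ i x, (l i x).IsHomogeneous 2) :
    IsEdelsteinKelly 𝕜 (Sigma.fst : (Σ i, ι i) → Fin 3) fun x => l x.1 x.2 where
  surjective k := by
    obtain ⟨z, -⟩ := h.exists_isHomogeneous_two k
    exact ⟨⟨k, z⟩, rfl⟩
  linearIndependent x y hxy := by
    refine (LinearIndependent.pair_iff' (h.irreducible _ _).ne_zero).mpr fun c hc => ?_
    exact h.not_dvd hxy x.2 y.2 ⟨C c, by rw [← hc, smul_eq_C_mul, mul_comm]⟩
  exists_mem_span x y k hxy := by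
    rcases eq_or_ne k x.1 with rfl | hkx
    · exact ⟨x, rfl, Submodule.subset_span (by simp)⟩
    rcases eq_or_ne k y.1 with rfl | hky
    · exact ⟨y, rfl, Submodule.subset_span (by simp)⟩
    obtain ⟨z, -, μ, ν, hz⟩ := h.exists_mem_pencil hxy hkx hky (hquad _ x.2) (hquad _ y.2)
    exact ⟨⟨k, z⟩, rfl, Submodule.mem_span_pair.mpr ⟨μ, ν, by simp [smul_eq_C_mul, hz]⟩⟩

theorem exists_finrank_lt_twelve {𝕜 : Type*} [RCLike 𝕜] [∀ i, Finite (ι i)]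
    {l : (i : Fin 3) → ι i → MvPolynomial σ 𝕜} (h : IsSGCircuit l) :
    ∃ V : Submodule 𝕜 (MvPolynomial σ 𝕜), FiniteDimensional 𝕜 V ∧ finrank 𝕜 V < 12 ∧
      ∀ i x, l i x ∈ Algebra.adjoin 𝕜 (V : Set (MvPolynomial σ 𝕜)) := by
  by_cases hlin : ∃ i x, (l i x).IsHomogeneous 1
  · obtain ⟨hfin, hle⟩ := h.finiteDimensional_and_finrank_linearFactorSpan_le hlin
    exact ⟨_, hfin, hle.trans_lt (by norm_num), h.mem_adjoin_linearFactorSpan hlin⟩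
  · have hquad (i) (x) : (l i x).IsHomogeneous 2 :=
      (h.isHomogeneous i x).resolve_left fun hx => hlin ⟨i, x, hx⟩
    refine ⟨_, FiniteDimensional.span_of_finite 𝕜 (Set.finite_range fun x : Σ i, ι i => l x.1 x.2),
      (h.isEdelsteinKelly hquad).finrank_span_lt_twelve (by decide), fun i x => ?_⟩
    exact Algebra.subset_adjoin (Submodule.subset_span ⟨⟨i, x⟩, rfl⟩)

end IsSGCircuit

variable [∀ i, Fintype (ι i)]

theorem isSGCircuit_of_isUnit_gcd [∀ i, Nonempty (ι i)] (hirr : ∀ i x, Irreducible (l i x))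
    (hdeg : ∀ i x, (l i x).IsHomogeneous 1 ∨ (l i x).IsHomogeneous 2)
    (hsimple : ∀ g : MvPolynomial σ K, (∀ i, g ∣ ∏ x, l i x) → IsUnit g)
    (hSG : ∀ (i : Fin 3) (s : ∀ j, ι j), ∏ x, l i x ∈
      (Ideal.span {p : MvPolynomial σ K | ∃ j, j ≠ i ∧ p = l j (s j)}).radical)
    (hprime : ∀ (i j : Fin 3) (x : ι i) (y : ι j), i ≠ j → (l i x).IsHomogeneous 2 →
      (l j y).IsHomogeneous 2 → (Ideal.span {l i x, l j y}).IsPrime)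
    (hnotall : ∃ (i j : Fin 3) (x : ι i) (y : ι j), i ≠ j ∧ (l i x).IsHomogeneous 2 ∧
      (l j y).IsHomogeneous 2) : IsSGCircuit l := by
  have hthird {i j k : Fin 3} (hij : i ≠ j) (hki : k ≠ i) (hkj : k ≠ j) (t : Fin 3) :
      t = i ∨ t = j ∨ t = k := by grind
  have hprod {i j k : Fin 3} (hij : i ≠ j) (hki : k ≠ i) (hkj : k ≠ j) (x : ι i) (y : ι j)
      (P : Ideal (MvPolynomial σ K)) (hP : P.IsPrime) (hx : l i x ∈ P) (hy : l j y ∈ P) :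
      ∏ z, l k z ∈ P := by
    let s : ∀ j, ι j :=
      Function.update (Function.update (fun _ => Classical.arbitrary _) i x) j y
    refine hP.radical_le_iff.mpr (Ideal.span_le.mpr ?_) (hSG k s)
    rintro _ ⟨t, htk, rfl⟩
    rcases hthird hij hki hkj t with rfl | rfl | rfl
    · simpa [s, hij] using hx
    · simpa [s] using hy
    · exact absurd rfl htk
  refine ⟨hirr, hdeg, fun {i j} hij x y hdvd => ?_, fun hij hki hkj x y P hP hx hy => ?_,
    fun hij x y => hprime _ _ x y hij, hnotall⟩
  · obtain ⟨k, hki, hkj⟩ := Fin.exists_ne_and_ne_of_two_lt i j (by decide)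
    refine (hirr i x).not_isUnit (hsimple _ fun t => ?_)
    rcases hthird hij hki hkj t with rfl | rfl | rfl
    · exact dvd_prod_of_mem _ (mem_univ x)
    · exact hdvd.trans (dvd_prod_of_mem _ (mem_univ y))
    · exact Ideal.mem_span_singleton.mp (hprod hij hki hkj x y _
        ((Ideal.span_singleton_prime (hirr i x).ne_zero).mpr (hirr i x).prime)
        (Ideal.mem_span_singleton_self _) (Ideal.mem_span_singleton.mpr hdvd))
  · obtain ⟨z, -, hz⟩ := hP.prod_mem_iff.mp (hprod hij hki hkj x y P hP hx hy)
    exact ⟨z, hz⟩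

theorem nonempty_of_isHomogeneous_prod (hirr : ∀ i x, Irreducible (l i x)) {D : ℕ}
    (hhom : ∀ i, (∏ x, l i x).IsHomogeneous D) {i : Fin 3} (x : ι i) (j : Fin 3) :
    Nonempty (ι j) := by
  by_contra hempty
  rw [not_nonempty_iff] at hempty
  have hj : (1 : MvPolynomial σ K).IsHomogeneous D := by simpa using hhom j
  obtain rfl : 0 = D := (isHomogeneous_one σ K).inj_right hj one_ne_zero
  have hne : ∏ x, l i x ≠ 0 := prod_ne_zero_iff.mpr fun x _ => (hirr i x).ne_zero
  have hunit : IsUnit (∏ x, l i x) := by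
    by_contra hunit
    exact (totalDegree_pos_of_not_isUnit hne hunit).ne' ((hhom i).totalDegree hne)
  exact (hirr i x).not_isUnit (isUnit_of_dvd_unit (dvd_prod_of_mem _ (mem_univ x)) hunit)

theorem trdeg_lt_twelve_of_SG_circuit_general {𝕜 : Type*} [RCLike 𝕜] [∀ i, Nonempty (ι i)]
    (l : (i : Fin 3) → ι i → MvPolynomial σ 𝕜)
    (hirr : ∀ i x, Irreducible (l i x))
    (hdeg : ∀ i x, (l i x).IsHomogeneous 1 ∨ (l i x).IsHomogeneous 2)
    (hsimple : ∀ g : MvPolynomial σ 𝕜, (∀ i, g ∣ ∏ x, l i x) → IsUnit g)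
    (hSG : ∀ (i : Fin 3) (s : ∀ j, ι j), ∏ x, l i x ∈
      (Ideal.span {p : MvPolynomial σ 𝕜 | ∃ j, j ≠ i ∧ p = l j (s j)}).radical)
    (hprime : ∀ (i j : Fin 3) (x : ι i) (y : ι j), i ≠ j → (l i x).IsHomogeneous 2 →
      (l j y).IsHomogeneous 2 → (Ideal.span {l i x, l j y}).IsPrime)
    (hnotall : ∃ (i j : Fin 3) (x : ι i) (y : ι j), i ≠ j ∧ (l i x).IsHomogeneous 2 ∧
      (l j y).IsHomogeneous 2)
    (s : Finset (MvPolynomial σ 𝕜)) (hs : ↑s ⊆ {p : MvPolynomial σ 𝕜 | ∃ i x, p = l i x})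
    (hindep : AlgebraicIndependent 𝕜
      (fun p : (s : Set (MvPolynomial σ 𝕜)) => (p : MvPolynomial σ 𝕜))) : #s < 12 := by
  obtain ⟨V, _, hV, hmem⟩ :=
    (isSGCircuit_of_isUnit_gcd hirr hdeg hsimple hSG hprime hnotall).exists_finrank_lt_twelve
  have hcard : Fintype.card (s : Set (MvPolynomial σ 𝕜)) ≤ finrank 𝕜 V :=
    card_le_finrank_of_algebraicIndependent_of_mem_adjoin hindep fun p => by
      obtain ⟨i, x, hp⟩ := hs p.2
      exact hp ▸ hmem i x
  simpa using hcard.trans_lt hV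

end Circuit

end

/-- For a simple homogeneous SG `ΣΠΣΠ(3,2)` circuit `F₁ + F₂ + F₃` over `ℂ` (factors
`l i j` irreducible homogeneous of degree `1` or `2`, branches homogeneous of the same
degree, `gcd(F₁,F₂,F₃) = 1`), in which every ideal generated by two degree-2 factors
from different branches is prime and not all degree-2 factors lie in one branch, the
transcendence degree of the set of factors is less than `12`: every algebraically
independent subset of the factors has fewer than `12` elements. -/
theorem trdeg_lt_twelve_of_SG_circuit
    (n : ℕ) (d : Fin 3 → ℕ) (D : ℕ)
    (l : (i : Fin 3) → Fin (d i) → MvPolynomial (Fin (n + 1)) ℂ)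
    (hirr : ∀ i j, Irreducible (l i j))
    (hdeg : ∀ i j, (l i j).IsHomogeneous 1 ∨ (l i j).IsHomogeneous 2)
    (hhom : ∀ i, (∏ j, l i j).IsHomogeneous D)
    (hsimple : ∀ g : MvPolynomial (Fin (n + 1)) ℂ, (∀ i, g ∣ ∏ j, l i j) → IsUnit g)
    (hSG : ∀ (i : Fin 3) (s : ∀ j, Fin (d j)),
      (∏ j, l i j) ∈
        Ideal.span {p : MvPolynomial (Fin (n + 1)) ℂ | ∃ j, j ≠ i ∧ p = l j (s j)})
    (hprime : ∀ (i j : Fin 3) (k : Fin (d i)) (t : Fin (d j)), i ≠ j →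
      (l i k).IsHomogeneous 2 → (l j t).IsHomogeneous 2 →
      (Ideal.span {l i k, l j t}).IsPrime)
    (hnotall : ∃ (i j : Fin 3) (k : Fin (d i)) (t : Fin (d j)), i ≠ j ∧
      (l i k).IsHomogeneous 2 ∧ (l j t).IsHomogeneous 2) :
    ∀ s : Finset (MvPolynomial (Fin (n + 1)) ℂ),
      (↑s ⊆ {p : MvPolynomial (Fin (n + 1)) ℂ | ∃ i j, p = l i j}) →
      AlgebraicIndependent ℂ
        (fun x : ↥(s : Set (MvPolynomial (Fin (n + 1)) ℂ)) =>
          (x : MvPolynomial (Fin (n + 1)) ℂ)) →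
      s.card < 12 := by
  have hne (j : Fin 3) : Nonempty (Fin (d j)) :=
    let ⟨_, _, k, _⟩ := hnotall
    nonempty_of_isHomogeneous_prod hirr hhom k j
  exact trdeg_lt_twelve_of_SG_circuit_general l hirr hdeg hsimple
    (fun i s => Ideal.le_radical (hSG i s)) hprime hnotall
end
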